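/- arXiv:1007.4584 — 3 statements merged into one kernel-verified Lean document; each statement's English description precedes it below -/
import Mathlib

section
/- For all n ≥ 2 and n-1 ≤ k ≤ 2n-3, the rational expression c(n,k;q) = (1/[n-1]_q) * qbinom(3n-3, n+k) * qbinom(k-1, n-2) is a polynomial in q with nonnegative integer coefficients. -/
/-- The Gaussian binomial coefficient as a polynomial in `q` over `ℤ`, via the
`q`-Pascal recursion `[n+1, k+1]_q = [n, k]_q + q^(k+1)·[n, k+1]_q`. -/
noncomputable def gauss : ℕ → ℕ → Polynomial ℤ
  | _, 0 => 1
  | 0, _ + 1 => 0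
  | n + 1, k + 1 => gauss n k + Polynomial.X ^ (k + 1) * gauss n (k + 1)


open Polynomial in
noncomputable def qn (m : ℕ) : Polynomial ℤ := ∑ i ∈ Finset.range m, X ^ i

open Polynomial in
lemma qn_add (a b : ℕ) : qn (a + b) = qn a + X ^ a * qn b := by
  unfold qn
  rw [Finset.sum_range_add, Finset.mul_sum]
  simp [pow_add]

lemma qn_zero : qn 0 = 0 := by simp [qn]

lemma qn_one : qn 1 = 1 := by simp [qn]

lemma gauss_zero_right (n : ℕ) : gauss n 0 = 1 := by
  cases n <;> simp [gauss]

lemma gauss_eq_zero : ∀ (n k : ℕ), n < k → gauss n k = 0 := by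
  intro n
  induction n with
  | zero => intro k hk; cases k with
    | zero => omega
    | succ k => simp [gauss]
  | succ n ih => intro k hk; cases k with
    | zero => omega
    | succ k => simp [gauss, ih k (by omega), ih (k+1) (by omega)]

lemma gauss_A : ∀ (n k r : ℕ), n = k + r → qn r * gauss n k = qn (k + 1) * gauss n (k + 1) := by
  intro n
  induction n with
  | zero =>
    intro k r h
    obtain ⟨rfl, rfl⟩ : k = 0 ∧ r = 0 := by omega
    simp [gauss, qn_zero]
  | succ n ih =>
    have hC : ∀ k r, n = k + r → qn (k + 1) * gauss (n + 1) (k + 1) = qn (n + 1) * gauss n k := by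
      intro k r h
      have := ih k r h
      have e : n + 1 = (k + 1) + r := by omega
      have e2 : qn (n + 1) = qn (k + 1) + Polynomial.X ^ (k + 1) * qn r := by rw [e, qn_add]
      rw [e2]
      simp only [gauss]
      linear_combination (- Polynomial.X ^ (k + 1)) * this
    intro k r h
    cases k with
    | zero =>
      have e : r = n + 1 := by omega
      rw [hC 0 n (by omega), e, gauss_zero_right, gauss_zero_right]
    | succ k =>
      have h1 : qn r * gauss (n + 1) (k + 1) = qn (n + 1) * gauss n (k + 1) := by
        have e2 : qn (n + 1) = qn (k + 1) + Polynomial.X ^ (k + 1) * qn r := by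
          rw [← qn_add, show k + 1 + r = n + 1 by omega]
        have := ih k r (by omega)
        rw [e2]
        simp only [gauss]
        linear_combination this
      rw [h1]
      cases r with
      | zero =>
        rw [gauss_eq_zero n (k + 1) (by omega), gauss_eq_zero (n + 1) (k + 1 + 1) (by omega)]
        simp
      | succ r => rw [hC (k + 1) r (by omega)]

lemma gauss_B (n k r : ℕ) (h : n = k + r) :
    qn r * gauss (n + 1) (k + 1) = qn (n + 1) * gauss n (k + 1) := by
  have e2 : qn (n + 1) = qn (k + 1) + Polynomial.X ^ (k + 1) * qn r := by
    rw [← qn_add, show k + 1 + r = n + 1 by omega]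
  have := gauss_A n k r h
  rw [e2]
  simp only [gauss]
  linear_combination this

lemma gauss_dvd (m j t : ℕ) (h : m = 1 + j + t) :
    qn m ∣ gauss (3 * m) (2 * m + 1 + j) * gauss (m + j - 1) (m - 1) := by
  obtain ⟨M, rfl⟩ : ∃ M, m = M + 1 := ⟨m - 1, by omega⟩
  have e : qn (M + 1) = 1 + Polynomial.X * qn j + Polynomial.X ^ (1 + j) * qn t := by
    rw [h, qn_add, qn_add, qn_one]; simp
  have h3 : qn (3 * (M + 1)) = qn (M + 1) *
      (1 + Polynomial.X ^ (M + 1) + Polynomial.X ^ (2 * (M + 1))) := by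
    rw [show 3 * (M + 1) = (M + 1) + ((M + 1) + (M + 1)) by ring, qn_add (M + 1) (M + 1 + (M + 1)),
      qn_add (M + 1) (M + 1)]
    ring
  have hA := gauss_A (M + j) M j rfl
  have hB := gauss_B (3 * M + 2) (2 * M + 2 + j) t (by omega)
  rw [show 3 * M + 2 + 1 = 3 * (M + 1) by ring, h3] at hB
  rw [show 2 * (M + 1) + 1 + j = 2 * M + 2 + j + 1 by ring, show M + 1 + j - 1 = M + j by omega,
    show M + 1 - 1 = M by omega]
  set a := gauss (3 * (M + 1)) (2 * M + 2 + j + 1)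
  set b := gauss (M + j) M
  refine ⟨a * b - Polynomial.X * a * gauss (M + j) (M + 1) - Polynomial.X ^ (1 + j) *
    ((1 + Polynomial.X ^ (M + 1) + Polynomial.X ^ (2 * (M + 1))) *
      gauss (3 * M + 2) (2 * M + 2 + j + 1)) * b, ?_⟩
  linear_combination (-a * b) * e - Polynomial.X * a * hA - Polynomial.X ^ (1 + j) * b * hB

lemma pos_of_unimodal (f p : Polynomial ℤ) (m : ℕ) (hm : 1 ≤ m) (hf : f = qn m * p) (d : ℤ)
    (h0 : 0 ≤ f.coeff 0)
    (hup : ∀ w : ℕ, 2 * (w : ℤ) < d → f.coeff w ≤ f.coeff (w + 1))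
    (hdn : ∀ w : ℕ, d < 2 * ((w : ℤ) + 1) → f.coeff (w + 1) ≤ f.coeff w) (w : ℕ) :
    0 ≤ p.coeff w := by
  have key : f - f * Polynomial.X = p - p * Polynomial.X ^ m := by
    have := mul_neg_geom_sum (Polynomial.X : Polynomial ℤ) m
    rw [hf]; unfold qn
    linear_combination p * this
  have k0 : p.coeff 0 = f.coeff 0 := by
    have := congrArg (fun g => Polynomial.coeff g 0) key
    have hm0 : ¬ (0 = m) := by omega
    simpa [Polynomial.coeff_mul_X_pow', hm0] using this.symm
  have k1 : ∀ u : ℕ, f.coeff (u + 1) - f.coeff u =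
      p.coeff (u + 1) - if m ≤ u + 1 then p.coeff (u + 1 - m) else 0 := by
    intro u
    have := congrArg (fun g => Polynomial.coeff g (u + 1)) key
    simpa [Polynomial.coeff_mul_X_pow', Polynomial.coeff_mul_X] using this
  have low : ∀ u : ℕ, 2 * ((u : ℤ) - 1) < d → 0 ≤ p.coeff u := by
    intro u
    induction u using Nat.strong_induction_on with
    | _ u ih =>
      intro hu
      cases u with
      | zero => rw [k0]; exact h0
      | succ u =>
        have h1 := k1 u
        have h2 := hup u (by push_cast at hu; linarith)
        split_ifs at h1 with h3
        · have := ih (u + 1 - m) (by omega) (by push_cast [h3] at hu ⊢; omega)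
          linarith
        · linarith
  have high : ∀ s u : ℕ, p.natDegree < u + s → d < 2 * ((u : ℤ) + m) → 0 ≤ p.coeff u := by
    intro s
    induction s with
    | zero => intro u hu _; rw [Polynomial.coeff_eq_zero_of_natDegree_lt (by omega)]
    | succ s ih =>
      intro u hu hd
      have h1 := k1 (u + m - 1)
      have h2 := hdn (u + m - 1) (by omega)
      rw [show u + m - 1 + 1 = u + m by omega, if_pos (by omega), Nat.add_sub_cancel] at h1
      rw [show u + m - 1 + 1 = u + m by omega] at h2
      have := ih (u + m) (by omega) (by push_cast; omega)
      linarith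
  by_cases h : 2 * ((w : ℤ) - 1) < d
  · exact low w h
  · exact high (p.natDegree + 1) w (by omega) (by omega)

open Matrix in
lemma card_le_of_comm {α : Type*} [Fintype α] [DecidableEq α] (E : Matrix α α ℝ) (h : α → ℝ)
    (hE : E * Eᵀ = Eᵀ * E + diagonal h) (A B : Finset α) (hA : ∀ a ∈ A, 0 < h a)
    (hAB : ∀ a ∈ A, ∀ b, E a b ≠ 0 → b ∈ B) : A.card ≤ B.card := by
  classical
  let ext : (A → ℝ) →ₗ[ℝ] (α → ℝ) :=
    { toFun := fun v a => if ha : a ∈ A then v ⟨a, ha⟩ else 0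
      map_add' := by intro v w; ext a; by_cases ha : a ∈ A <;> simp [ha]
      map_smul' := by intro c v; ext a; by_cases ha : a ∈ A <;> simp [ha] }
  let T : (A → ℝ) →ₗ[ℝ] (B → ℝ) :=
    (LinearMap.funLeft ℝ ℝ (fun b : B => (b : α))) ∘ₗ E.vecMulLinear ∘ₗ ext
  have hT : Function.Injective T := by
    rw [← LinearMap.ker_eq_bot, LinearMap.ker_eq_bot']
    intro v hv
    have hz : ext v ᵥ* E = 0 := by
      ext b
      by_cases hb : b ∈ B
      · exact congrFun hv ⟨b, hb⟩
      · simp only [vecMul, dotProduct, Pi.zero_apply]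
        apply Finset.sum_eq_zero
        intro a _
        by_cases ha : a ∈ A
        · have : E a b = 0 := by
            by_contra hne
            exact hb (hAB a ha b hne)
          simp [this]
        · simp [ext, ha]
    have h1 : ext v ᵥ* (E * Eᵀ) ⬝ᵥ ext v = 0 := by
      rw [← vecMul_vecMul, hz]; simp
    rw [hE, vecMul_add, add_dotProduct, ← vecMul_vecMul, ← dotProduct_mulVec,
      ← vecMul_transpose] at h1
    have h2 : 0 ≤ (ext v ᵥ* Eᵀ) ⬝ᵥ (ext v ᵥ* Eᵀ) :=
      Finset.sum_nonneg fun i _ => mul_self_nonneg _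
    have h3 : (ext v ᵥ* diagonal h) ⬝ᵥ ext v = ∑ a, h a * (ext v a * ext v a) := by
      simp only [dotProduct, vecMul_diagonal]
      exact Finset.sum_congr rfl fun a _ => by ring
    have h5 : ∀ a ∈ Finset.univ, 0 ≤ h a * (ext v a * ext v a) := by
      intro a _
      by_cases ha : a ∈ A
      · exact mul_nonneg (hA a ha).le (mul_self_nonneg _)
      · simp [ext, ha]
    have h4 : ∑ a, h a * (ext v a * ext v a) = 0 := by
      have := Finset.sum_nonneg h5
      linarith
    rw [Finset.sum_eq_zero_iff_of_nonneg h5] at h4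
    ext ⟨a, ha⟩
    have h6 := h4 a (Finset.mem_univ a)
    have h7 := hA a ha
    have h8 : ext v a = 0 := by
      rcases mul_eq_zero.1 h6 with h9 | h9
      · linarith
      · exact mul_self_eq_zero.1 h9
    simpa [ext, ha] using h8
  have := LinearMap.finrank_le_finrank_of_injective hT
  simpa using this

/-- exchange of neighbouring sites -/
def sw {N : ℕ} (i : Fin N) (S : Fin (N + 1) → Bool) : Fin (N + 1) → Bool :=
  fun x => S (Equiv.swap i.castSucc i.succ x)

lemma sw_sw {N : ℕ} (i : Fin N) (S : Fin (N + 1) → Bool) : sw i (sw i S) = S := by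
  ext x; simp [sw]

/-- elementary raising matrix -/
def emat {N : ℕ} (i : Fin N) : Matrix (Fin (N + 1) → Bool) (Fin (N + 1) → Bool) ℝ :=
  fun S T => if S i.castSucc = true ∧ S i.succ = false ∧ T = sw i S then 1 else 0

open Matrix in
lemma em_mul {N : ℕ} (i : Fin N) (M : Matrix (Fin (N + 1) → Bool) (Fin (N + 1) → Bool) ℝ) (S T) :
    (emat i * M) S T = if S i.castSucc = true ∧ S i.succ = false then M (sw i S) T else 0 := by
  rw [mul_apply]
  by_cases h : S i.castSucc = true ∧ S i.succ = false
  · simp [emat, h]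
  · rw [if_neg h]
    apply Finset.sum_eq_zero
    intro R _
    have : emat i S R = 0 := by unfold emat; rw [if_neg]; tauto
    simp [this]

open Matrix in
lemma emT_apply {N : ℕ} (i : Fin N) (S T : Fin (N + 1) → Bool) :
    (emat i)ᵀ S T = if S i.castSucc = false ∧ S i.succ = true ∧ T = sw i S then 1 else 0 := by
  simp only [transpose_apply, emat]
  congr 1
  apply propext
  constructor
  · rintro ⟨h1, h2, rfl⟩
    refine ⟨?_, ?_, (sw_sw _ _).symm⟩ <;> simp [sw, h1, h2]
  · rintro ⟨h1, h2, rfl⟩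
    refine ⟨?_, ?_, (sw_sw _ _).symm⟩ <;> simp [sw, h1, h2]

open Matrix in
lemma emT_mul {N : ℕ} (i : Fin N) (M : Matrix (Fin (N + 1) → Bool) (Fin (N + 1) → Bool) ℝ) (S T) :
    ((emat i)ᵀ * M) S T = if S i.castSucc = false ∧ S i.succ = true then M (sw i S) T else 0 := by
  rw [mul_apply]
  by_cases h : S i.castSucc = false ∧ S i.succ = true
  · simp only [emT_apply]
    simp [h]
  · rw [if_neg h]
    apply Finset.sum_eq_zero
    intro R _
    have : (emat i)ᵀ S R = 0 := by rw [emT_apply, if_neg]; tauto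
    rw [this, zero_mul]

open Matrix in
lemma em_comm {N : ℕ} (i j : Fin N) (hij : i ≠ j) : emat i * (emat j)ᵀ = (emat j)ᵀ * emat i := by
  ext S T
  rw [em_mul, emT_mul, emT_apply]
  unfold emat
  have hij' : (i : ℕ) ≠ j := fun h => hij (Fin.ext h)
  by_cases h1 : j.succ = i.castSucc
  · have a1 : ∀ S, sw i S j.succ = S i.succ := by intro S; simp [sw, h1]
    have a2 : ∀ S, sw j S i.castSucc = S j.castSucc := by intro S; simp [sw, ← h1]
    rw [a1, a2]
    split_ifs <;> simp_all
  by_cases h2 : i.succ = j.castSucc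
  · have a1 : ∀ S, sw i S j.castSucc = S i.castSucc := by intro S; simp [sw, ← h2]
    have a2 : ∀ S, sw j S i.succ = S j.succ := by intro S; simp [sw, h2]
    rw [a1, a2]
    split_ifs <;> simp_all
  have h3 : i.castSucc ≠ j.castSucc := by simpa using hij
  have h4 : i.succ ≠ j.succ := by simpa using hij
  have a1 : ∀ S, sw i S j.castSucc = S j.castSucc := by
    intro S; simp only [sw]; rw [Equiv.swap_apply_of_ne_of_ne (Ne.symm h3) (Ne.symm h2)]
  have a2 : ∀ S, sw i S j.succ = S j.succ := by
    intro S; simp only [sw]; rw [Equiv.swap_apply_of_ne_of_ne h1 (Ne.symm h4)]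
  have a3 : ∀ S, sw j S i.castSucc = S i.castSucc := by
    intro S; simp only [sw]; rw [Equiv.swap_apply_of_ne_of_ne h3 (Ne.symm h1)]
  have a4 : ∀ S, sw j S i.succ = S i.succ := by
    intro S; simp only [sw]; rw [Equiv.swap_apply_of_ne_of_ne h2 h4]
  have a5 : sw j (sw i S) = sw i (sw j S) := by
    ext x
    simp only [sw]
    congr 1
    have hd : Equiv.Perm.Disjoint (Equiv.swap i.castSucc i.succ) (Equiv.swap j.castSucc j.succ) := by
      intro y
      by_cases y1 : y = i.castSucc
      · right; subst y1; exact Equiv.swap_apply_of_ne_of_ne h3 (Ne.symm h1)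
      by_cases y2 : y = i.succ
      · right; subst y2; exact Equiv.swap_apply_of_ne_of_ne h2 h4
      · left; exact Equiv.swap_apply_of_ne_of_ne y1 y2
    exact congrArg (fun p : Equiv.Perm _ => p x) hd.commute.eq
  rw [a1, a2, a3, a4, a5]
  split_ifs <;> first | rfl | tauto

open Matrix in
lemma em_self {N : ℕ} (i : Fin N) : emat i * (emat i)ᵀ = (emat i)ᵀ * emat i +
    diagonal (fun S => (if S i.castSucc = true then (1 : ℝ) else 0) -
      (if S i.succ = true then (1 : ℝ) else 0)) := by
  ext S T
  rw [Matrix.add_apply, em_mul, emT_mul, emT_apply, diagonal_apply]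
  unfold emat
  rw [sw_sw]
  have b1 : sw i S i.castSucc = S i.succ := by simp [sw]
  have b2 : sw i S i.succ = S i.castSucc := by simp [sw]
  rw [b1, b2]
  by_cases hST : S = T
  · subst hST
    rcases h1 : S i.castSucc <;> rcases h2 : S i.succ <;> simp
  · have : T ≠ S := Ne.symm hST
    simp [hST, this]

/-- full raising matrix -/
noncomputable def Emat (N : ℕ) : Matrix (Fin (N + 1) → Bool) (Fin (N + 1) → Bool) ℝ :=
  ∑ i : Fin N, Real.sqrt (((i : ℝ) + 1) * (N - i)) • emat i

/-- number of occupied sites -/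
def cnt {N : ℕ} (S : Fin N → Bool) : ℕ := ∑ i, if S i = true then 1 else 0

/-- sum of the occupied sites -/
def rk {N : ℕ} (S : Fin N → Bool) : ℕ := ∑ i, if S i = true then (i : ℕ) else 0

lemma weight_sum (N : ℕ) (x : Fin (N + 1) → ℝ) :
    ∑ i : Fin N, (((i : ℝ) + 1) * (N - i)) * (x i.castSucc - x i.succ) =
      ∑ i : Fin (N + 1), ((N : ℝ) - 2 * i) * x i := by
  have h1 := Fin.sum_univ_castSucc (fun i : Fin (N + 1) => (((i : ℝ) + 1) * (N - i)) * x i)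
  have h2 := Fin.sum_univ_succ (fun i : Fin (N + 1) => ((i : ℝ) * (N + 1 - i)) * x i)
  simp only [Fin.val_castSucc, Fin.val_last, sub_self, mul_zero, zero_mul, add_zero] at h1
  simp only [Fin.val_succ, Fin.val_zero, Nat.cast_zero, zero_mul, zero_add] at h2
  have h3 : ∑ i : Fin (N + 1), ((N : ℝ) - 2 * i) * x i =
    ∑ i : Fin (N + 1), (((i : ℝ) + 1) * (N - i)) * x i -
      ∑ i : Fin (N + 1), ((i : ℝ) * (N + 1 - i)) * x i := by
    rw [← Finset.sum_sub_distrib]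
    exact Finset.sum_congr rfl fun i _ => by ring
  rw [h3, h1, h2, ← Finset.sum_sub_distrib]
  refine Finset.sum_congr rfl fun i _ => ?_
  push_cast; ring

open Matrix in
lemma Em_comm (N : ℕ) : Emat N * (Emat N)ᵀ = (Emat N)ᵀ * Emat N +
    diagonal (fun S => (N : ℝ) * cnt S - 2 * rk S) := by
  have hd : diagonal (fun S : Fin (N + 1) → Bool => (N : ℝ) * cnt S - 2 * rk S) =
      ∑ i : Fin N, (((i : ℝ) + 1) * (N - i)) •
        diagonal (fun S : Fin (N + 1) → Bool => (if S i.castSucc = true then (1 : ℝ) else 0) -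
      (if S i.succ = true then (1 : ℝ) else 0)) := by
    ext S T
    rw [Matrix.sum_apply]
    simp only [Matrix.smul_apply, diagonal_apply]
    by_cases hST : S = T
    · simp only [hST, if_true, smul_eq_mul]
      rw [weight_sum N (fun i => if T i = true then (1 : ℝ) else 0)]
      simp only [cnt, rk]
      push_cast
      rw [Finset.mul_sum, Finset.mul_sum, ← Finset.sum_sub_distrib]
      refine Finset.sum_congr rfl fun i _ => ?_
      split_ifs <;> simp
    · simp [hST]
  rw [hd]
  unfold Emat
  rw [transpose_sum, Finset.sum_mul_sum, Finset.sum_mul_sum]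
  conv_rhs => rw [Finset.sum_comm, ← Finset.sum_add_distrib]
  refine Finset.sum_congr rfl fun i _ => ?_
  rw [← Finset.add_sum_erase _ _ (Finset.mem_univ i)]
  conv_rhs => rw [← Finset.add_sum_erase _ _ (Finset.mem_univ i)]
  have hs : ∑ x ∈ Finset.univ.erase i, √((((i:ℕ):ℝ) + 1) * (N - (i:ℕ))) • emat i *
      (√((((x:ℕ):ℝ) + 1) * (N - (x:ℕ))) • emat x)ᵀ = ∑ x ∈ Finset.univ.erase i,
      (√((((x:ℕ):ℝ) + 1) * (N - (x:ℕ))) • emat x)ᵀ * √((((i:ℕ):ℝ) + 1) * (N - (i:ℕ))) • emat i := by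
    refine Finset.sum_congr rfl fun j hj => ?_
    have hne : i ≠ j := (Finset.ne_of_mem_erase hj).symm
    rw [transpose_smul, Matrix.smul_mul, Matrix.mul_smul, Matrix.smul_mul, Matrix.mul_smul,
      em_comm i j hne, smul_comm]
  rw [hs]
  have hnn : (0 : ℝ) ≤ ((i : ℝ) + 1) * (N - i) := by
    have : ((i : ℕ) : ℝ) ≤ N := by exact_mod_cast i.2.le
    exact mul_nonneg (by positivity) (by linarith)
  have hself : √((((i:ℕ):ℝ) + 1) * (N - (i:ℕ))) • emat i *
      (√((((i:ℕ):ℝ) + 1) * (N - (i:ℕ))) • emat i)ᵀ =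
      (√((((i:ℕ):ℝ) + 1) * (N - (i:ℕ))) • emat i)ᵀ * √((((i:ℕ):ℝ) + 1) * (N - (i:ℕ))) • emat i +
      (((i : ℝ) + 1) * (N - i)) •
        diagonal (fun S : Fin (N + 1) → Bool => (if S i.castSucc = true then (1 : ℝ) else 0) -
      (if S i.succ = true then (1 : ℝ) else 0)) := by
    rw [transpose_smul, Matrix.smul_mul, Matrix.mul_smul, Matrix.smul_mul, Matrix.mul_smul,
      smul_smul, smul_smul, Real.mul_self_sqrt hnn, em_self, smul_add]
  rw [hself]
  abel

lemma Em_ne {N : ℕ} (S T : Fin (N + 1) → Bool) (h : Emat N S T ≠ 0) :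
    cnt T = cnt S ∧ rk T = rk S + 1 := by
  unfold Emat at h
  rw [Matrix.sum_apply] at h
  obtain ⟨i, _, hi⟩ := Finset.exists_ne_zero_of_sum_ne_zero h
  rw [Matrix.smul_apply] at hi
  have hi2 : emat i S T ≠ 0 := fun h0 => hi (by rw [h0]; simp)
  unfold emat at hi2
  have hc : S i.castSucc = true ∧ S i.succ = false ∧ T = sw i S := by
    by_contra hc; exact hi2 (if_neg hc)
  obtain ⟨h1, h2, rfl⟩ := hc
  constructor
  · unfold cnt sw
    exact Equiv.sum_comp (Equiv.swap i.castSucc i.succ) (fun x => if S x = true then 1 else 0)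
  · unfold rk
    have hne : i.succ ≠ i.castSucc := by
      intro h; have := congrArg Fin.val h; simp at this
    have m1 : i.succ ∈ Finset.univ.erase i.castSucc := by simp [hne]
    rw [← Finset.add_sum_erase _ _ (Finset.mem_univ i.castSucc), ← Finset.add_sum_erase _ _ m1]
    rw [← Finset.add_sum_erase (a := i.castSucc) (s := Finset.univ)
      (f := fun x => if S x = true then (x : ℕ) else 0) (Finset.mem_univ i.castSucc),
      ← Finset.add_sum_erase _ _ m1]
    have : ∑ x ∈ (Finset.univ.erase i.castSucc).erase i.succ, (if sw i S x = true then (x : ℕ) else 0)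
      = ∑ x ∈ (Finset.univ.erase i.castSucc).erase i.succ, (if S x = true then (x : ℕ) else 0) := by
      refine Finset.sum_congr rfl fun x hx => ?_
      simp only [Finset.mem_erase] at hx
      have hx2 : sw i S x = S x := by
        unfold sw
        rw [Equiv.swap_apply_of_ne_of_ne hx.2.1 hx.1]
      rw [hx2]
    rw [this]
    simp [sw, h1, h2]
    ring

open Polynomial in
lemma gauss_gen : ∀ (N k : ℕ), (∑ S : Fin N → Bool, if cnt S = k then (X : ℤ[X]) ^ rk S else 0) =
    X ^ (k.choose 2) * gauss N k := by
  intro N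
  induction N with
  | zero =>
    intro k
    cases k <;> simp [gauss, cnt, rk]
  | succ N ih =>
    have hc : ∀ (b : Bool) (S : Fin N → Bool), cnt (Fin.cons b S : Fin (N + 1) → Bool) =
        (if b = true then 1 else 0) + cnt S := by
      intro b S; unfold cnt; rw [Fin.sum_univ_succ]; simp
    have hr : ∀ (b : Bool) (S : Fin N → Bool), rk (Fin.cons b S : Fin (N + 1) → Bool) =
        rk S + cnt S := by
      intro b S; unfold cnt rk; rw [Fin.sum_univ_succ, ← Finset.sum_add_distrib]
      simp only [Fin.val_zero, ite_self, zero_add, Fin.cons_succ, Fin.val_succ]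
      refine Finset.sum_congr rfl fun i _ => ?_
      split_ifs <;> simp
    intro k
    rw [← (Fin.consEquiv (fun _ => Bool)).sum_comp, Fintype.sum_prod_type, Fintype.sum_bool]
    simp only [Fin.consEquiv, Equiv.coe_fn_mk, hc, hr]
    have hs : ∀ l : ℕ, (∑ S : Fin N → Bool, if cnt S = l then (X : ℤ[X]) ^ (rk S + cnt S) else 0) =
        X ^ l * (X ^ (l.choose 2) * gauss N l) := by
      intro l
      rw [← ih, Finset.mul_sum]
      refine Finset.sum_congr rfl fun S _ => ?_
      split_ifs with h
      · rw [h, pow_add, mul_comm]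
      · simp
    cases k with
    | zero =>
      have := hs 0
      simp at this
      simp [gauss_zero_right] at this ⊢
      exact this
    | succ k =>
      have e1 := hs k
      have e2 := hs (k + 1)
      have e3 : ∀ S : Fin N → Bool, (1 + cnt S = k + 1) = (cnt S = k) := by
        intro S; apply propext; omega
      simp only [if_true, Bool.false_eq_true, if_false, zero_add, e3]
      rw [e1, e2]
      have : (k + 1).choose 2 = k + k.choose 2 := by
        rw [Nat.choose_succ_succ' k 1]; simp
      simp only [gauss]
      rw [this]
      ring

/-- level sets -/
def lev (N M k l w : ℕ) : Finset ((Fin (N + 1) → Bool) × (Fin (M + 1) → Bool)) :=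
  Finset.univ.filter fun a => (cnt a.1 = k ∧ cnt a.2 = l) ∧ w = rk a.1 + rk a.2

open Polynomial in
lemma coeff_lev (N M k l w : ℕ) :
    ((X : ℤ[X]) ^ (k.choose 2 + l.choose 2) * (gauss (N + 1) k * gauss (M + 1) l)).coeff w =
      ((lev N M k l w).card : ℤ) := by
  have : (X : ℤ[X]) ^ (k.choose 2 + l.choose 2) * (gauss (N + 1) k * gauss (M + 1) l) =
      ∑ a : (Fin (N + 1) → Bool) × (Fin (M + 1) → Bool),
        if cnt a.1 = k ∧ cnt a.2 = l then (X : ℤ[X]) ^ (rk a.1 + rk a.2) else 0 := by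
    rw [Fintype.sum_prod_type]
    calc _ = (X ^ (k.choose 2) * gauss (N + 1) k) * (X ^ (l.choose 2) * gauss (M + 1) l) := by ring
      _ = _ := by
        rw [← gauss_gen, ← gauss_gen, Finset.sum_mul_sum]
        refine Finset.sum_congr rfl fun S _ => Finset.sum_congr rfl fun T _ => ?_
        by_cases h1 : cnt S = k <;> by_cases h2 : cnt T = l <;> simp [h1, h2, pow_add]
  rw [this, finsetSum_coeff, lev, Finset.card_filter]
  push_cast
  refine Finset.sum_congr rfl fun a _ => ?_
  by_cases h : cnt a.1 = k ∧ cnt a.2 = l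
  · simp only [h, and_self, if_true, true_and, coeff_X_pow]
  · rw [if_neg h, if_neg (fun h' => h h'.1)]; simp

open Matrix Kronecker in
lemma lev_mono (N M k l w : ℕ) :
    (2 * (w : ℤ) < N * k + M * l → (lev N M k l w).card ≤ (lev N M k l (w + 1)).card) ∧
    ((N * k + M * l : ℤ) < 2 * (w + 1) → (lev N M k l (w + 1)).card ≤ (lev N M k l w).card) := by
  let E : Matrix ((Fin (N + 1) → Bool) × (Fin (M + 1) → Bool))
    ((Fin (N + 1) → Bool) × (Fin (M + 1) → Bool)) ℝ := Emat N ⊗ₖ 1 + 1 ⊗ₖ Emat M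
  let h : ((Fin (N + 1) → Bool) × (Fin (M + 1) → Bool)) → ℝ := fun a =>
    ((N : ℝ) * cnt a.1 - 2 * rk a.1) + ((M : ℝ) * cnt a.2 - 2 * rk a.2)
  have hd : diagonal h = diagonal (fun S : Fin (N + 1) → Bool => (N : ℝ) * cnt S - 2 * rk S) ⊗ₖ 1 +
      1 ⊗ₖ diagonal (fun S : Fin (M + 1) → Bool => (M : ℝ) * cnt S - 2 * rk S) := by
    rw [← diagonal_one, ← diagonal_one, diagonal_kronecker_diagonal, diagonal_kronecker_diagonal,
      diagonal_add]
    simp [h]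
  have hE : E * Eᵀ = Eᵀ * E + diagonal h := by
    rw [hd]
    have t : Eᵀ = (Emat N)ᵀ ⊗ₖ 1 + 1 ⊗ₖ (Emat M)ᵀ := by
      simp only [E, transpose_add, ← kroneckerMap_transpose, transpose_one]
    rw [t]
    simp only [E, add_mul, mul_add, ← mul_kronecker_mul, one_mul, mul_one, Em_comm,
      add_kronecker, kronecker_add]
    abel
  have hne : ∀ a b, E a b ≠ 0 → (cnt b.1 = cnt a.1 ∧ cnt b.2 = cnt a.2) ∧
      rk b.1 + rk b.2 = rk a.1 + rk a.2 + 1 := by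
    rintro ⟨a1, a2⟩ ⟨b1, b2⟩ hab
    simp only [E, Matrix.add_apply, kroneckerMap_apply] at hab
    by_cases hz : Emat N a1 b1 * (1 : Matrix _ _ ℝ) a2 b2 = 0
    · rw [hz, zero_add] at hab
      have h1 := Em_ne _ _ (right_ne_zero_of_mul hab)
      have h2 : a1 = b1 := by
        by_contra hn; exact left_ne_zero_of_mul hab (Matrix.one_apply_ne hn)
      subst h2
      obtain ⟨h3, h4⟩ := h1
      refine ⟨⟨?_, ?_⟩, ?_⟩ <;> simp only [] <;> omega
    · have h1 := Em_ne _ _ (left_ne_zero_of_mul hz)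
      have h2 : a2 = b2 := by
        by_contra hn; exact right_ne_zero_of_mul hz (Matrix.one_apply_ne hn)
      subst h2
      obtain ⟨h3, h4⟩ := h1
      refine ⟨⟨?_, ?_⟩, ?_⟩ <;> simp only [] <;> omega
  have hh : ∀ u, ∀ a ∈ lev N M k l u, h a = (((N * k + M * l : ℤ) - 2 * u : ℤ) : ℝ) := by
    intro u a ha
    simp only [lev, Finset.mem_filter] at ha
    obtain ⟨_, ⟨h1, h2⟩, h3⟩ := ha
    simp only [h, h1, h2, h3]
    push_cast; ring
  constructor
  · intro hw
    refine card_le_of_comm E h hE _ _ ?_ ?_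
    · intro a ha
      rw [hh w a ha]
      apply Int.cast_pos.2
      linarith
    · intro a ha b hab
      have := hne a b hab
      simp only [lev, Finset.mem_filter, Finset.mem_univ, true_and] at ha ⊢
      omega
  · intro hw
    refine card_le_of_comm Eᵀ (fun a => - h a) ?_ _ _ ?_ ?_
    · rw [transpose_transpose, hE, add_assoc, diagonal_add]
      simp
    · intro a ha
      rw [hh (w + 1) a ha, ← Int.cast_neg]
      apply Int.cast_pos.2
      push_cast
      linarith
    · intro a ha b hab
      have := hne b a hab
      simp only [lev, Finset.mem_filter, Finset.mem_univ, true_and] at ha ⊢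
      omega

theorem stmt5 (n k : ℕ) (hn : 2 ≤ n) (hnk : (n : ℤ) - 1 ≤ (k : ℤ))
    (hk : (k : ℤ) ≤ 2 * (n : ℤ) - 3) :
    ∃ p : Polynomial ℕ,
      gauss (3 * n - 3) (n + k) * gauss (k - 1) (n - 2) =
        (∑ i ∈ Finset.range (n - 1), Polynomial.X ^ i) *
          p.map (Nat.castRingHom ℤ) := by
  obtain ⟨m, rfl⟩ : ∃ m, n = m + 1 := ⟨n - 1, by omega⟩
  obtain ⟨j, rfl⟩ : ∃ j, k = m + j := ⟨k - m, by omega⟩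
  obtain ⟨t, ht⟩ : ∃ t, m = 1 + j + t := ⟨m - 1 - j, by omega⟩
  rw [show 3 * (m + 1) - 3 = 3 * m by omega, show m + 1 + (m + j) = 2 * m + 1 + j by omega,
    show m + 1 - 2 = m - 1 by omega, show m + 1 - 1 = m by omega]
  by_cases hm : m = 1
  · subst hm
    obtain rfl : j = 0 := by omega
    exact ⟨1, by simp [gauss]⟩
  obtain ⟨c, hc⟩ := gauss_dvd m j t ht
  obtain ⟨N, hN⟩ : ∃ N, 3 * m = N + 1 := ⟨3 * m - 1, by omega⟩
  obtain ⟨M, hM⟩ : ∃ M, m + j - 1 = M + 1 := ⟨m + j - 2, by omega⟩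
  have hpos : ∀ w, 0 ≤ c.coeff w := by
    intro w
    set s := (2 * m + 1 + j).choose 2 + (m - 1).choose 2 with hs
    have := pos_of_unimodal
      (Polynomial.X ^ s * (gauss (3 * m) (2 * m + 1 + j) * gauss (m + j - 1) (m - 1)))
      (Polynomial.X ^ s * c) m (by omega) (by rw [hc]; ring)
      (N * (2 * m + 1 + j : ℕ) + M * (m - 1 : ℕ))
      (by rw [hN, hM, hs, coeff_lev]; positivity)
      (by
        intro w hw
        rw [hN, hM, hs, coeff_lev, coeff_lev]
        exact_mod_cast (lev_mono N M _ _ w).1 hw)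
      (by
        intro w hw
        rw [hN, hM, hs, coeff_lev, coeff_lev]
        exact_mod_cast (lev_mono N M _ _ w).2 hw) (w + s)
    rwa [Polynomial.coeff_X_pow_mul] at this
  have hl : c ∈ Polynomial.lifts (Nat.castRingHom ℤ) := by
    rw [Polynomial.lifts_iff_coeff_lifts]
    intro w
    exact ⟨(c.coeff w).toNat, by simpa using hpos w⟩
  obtain ⟨p, hp⟩ := (Polynomial.mem_lifts c).1 hl
  exact ⟨p, by rw [hp]; exact hc⟩
end

section
/- The number of non-crossing connected graphs on n labelled vertices arranged on a circle with k edges, for n-1 ≤ k ≤ 2n-3, equals (1/(n-1)) * binom(3n-3, n+k) * binom(k-1, n-2). -/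
/-- Two chords of the circle (with vertices `0 < 1 < ⋯ < n-1` in convex position)
cross iff their endpoints interleave. -/
def Crosses {n : ℕ} (e f : Sym2 (Fin n)) : Prop :=
  ∃ a b c d : Fin n, e = s(a, b) ∧ f = s(c, d) ∧ a < c ∧ c < b ∧ b < d

/-- A set of edges is non-crossing (and has no loops). -/
def IsNC {n : ℕ} (E : Finset (Sym2 (Fin n))) : Prop :=
  (∀ e ∈ E, ¬ e.IsDiag) ∧ ∀ e ∈ E, ∀ f ∈ E, ¬ Crosses e f

/-- The simple graph on `Fin n` determined by an edge set. -/
def graphOf {n : ℕ} (E : Finset (Sym2 (Fin n))) : SimpleGraph (Fin n) :=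
  SimpleGraph.fromEdgeSet (↑E)

/-- Non-crossing connected graph. -/
def IsNCC {n : ℕ} (E : Finset (Sym2 (Fin n))) : Prop :=
  IsNC E ∧ (graphOf E).Connected

/-- Number of non-crossing connected graphs on `n` vertices with `k` edges. -/
noncomputable def ncc (n k : ℕ) : ℕ :=
  Nat.card {E : Finset (Sym2 (Fin n)) // IsNCC E ∧ E.card = k}

/-- The edge set contains the edge `{1, n}` (in `Fin n` coordinates, `{0, n-1}`). -/
def HasEdge1n {n : ℕ} (E : Finset (Sym2 (Fin n))) : Prop :=
  ∃ a b : Fin n, (a : ℕ) = 0 ∧ (b : ℕ) = n - 1 ∧ s(a, b) ∈ E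

/-- Number of non-crossing connected graphs on `n` vertices with `k` edges
containing the edge `{1, n}`. -/
noncomputable def nccEdge (n k : ℕ) : ℕ :=
  Nat.card {E : Finset (Sym2 (Fin n)) // IsNCC E ∧ E.card = k ∧ HasEdge1n E}

/-- Rotation of the circle of `n` vertices by `m` positions. -/
def rotMap (n m : ℕ) : Fin n → Fin n := fun i => ⟨(i.1 + m) % n, Nat.mod_lt _ i.pos⟩

/-- The edge set is fixed under rotation by `m` positions. -/
def RotInv (n m : ℕ) (E : Finset (Sym2 (Fin n))) : Prop :=
  ∀ e ∈ E, Sym2.map (rotMap n m) e ∈ E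

/-- Number of non-crossing connected graphs on `n` vertices with `k` edges fixed
under rotation by `m` positions. -/
noncomputable def nccRot (n k m : ℕ) : ℕ :=
  Nat.card {E : Finset (Sym2 (Fin n)) // IsNCC E ∧ E.card = k ∧ RotInv n m E}



def FNConn (a b : ℕ) (E : Finset (ℕ × ℕ)) : Prop :=
  ∀ f : ℕ → Prop, (∀ p q, (p, q) ∈ E → (f p ↔ f q)) → ∀ x, a ≤ x → x ≤ b → (f x ↔ f a)

def FNValid (a b : ℕ) (E : Finset (ℕ × ℕ)) : Prop :=
  (∀ p q, (p, q) ∈ E → a ≤ p ∧ p < q ∧ q ≤ b) ∧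
  ∀ p q r s, (p, q) ∈ E → (r, s) ∈ E → ¬ (p < r ∧ r < q ∧ q < s)

open Classical in
noncomputable def FNS (a b : ℕ) : Finset (Finset (ℕ × ℕ)) :=
  (Finset.Icc a b ×ˢ Finset.Icc a b).powerset.filter (fun E => FNValid a b E ∧ FNConn a b E)

theorem mem_FNS {a b : ℕ} {E : Finset (ℕ × ℕ)} :
    E ∈ FNS a b ↔ FNValid a b E ∧ FNConn a b E := by
  classical
  unfold FNS
  rw [Finset.mem_filter]
  constructor
  · exact fun h => h.2
  · intro h
    refine ⟨?_, h⟩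
    rw [Finset.mem_powerset]
    rintro ⟨p, q⟩ hpq
    have := h.1.1 p q hpq
    simp only [Finset.mem_product, Finset.mem_Icc]
    omega

noncomputable def FNW (a b : ℕ) : Polynomial ℤ := ∑ E ∈ FNS a b, Polynomial.X ^ E.card

open Classical in
noncomputable def FND (a b : ℕ) : Polynomial ℤ :=
  ∑ E ∈ (FNS a b).filter (fun E => (a, b) ∈ E), Polynomial.X ^ E.card

/-- lower part -/
def FNlo (i : ℕ) (E : Finset (ℕ × ℕ)) : Finset (ℕ × ℕ) := E.filter (fun e => e.2 ≤ i)
/-- upper part -/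
def FNhi (i : ℕ) (E : Finset (ℕ × ℕ)) : Finset (ℕ × ℕ) := E.filter (fun e => i ≤ e.1)

theorem mem_FNlo {i p q : ℕ} {E : Finset (ℕ × ℕ)} : (p, q) ∈ FNlo i E ↔ (p, q) ∈ E ∧ q ≤ i := by
  simp [FNlo]
theorem mem_FNhi {i p q : ℕ} {E : Finset (ℕ × ℕ)} : (p, q) ∈ FNhi i E ↔ (p, q) ∈ E ∧ i ≤ p := by
  simp [FNhi]

theorem FNValid.sub {a b c d : ℕ} {E F : Finset (ℕ × ℕ)} (h : FNValid a b E)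
    (hF : ∀ p q, (p, q) ∈ F → (p, q) ∈ E ∧ c ≤ p ∧ q ≤ d) : FNValid c d F := by
  refine ⟨fun p q hpq => ?_, fun p q r s h1 h2 => h.2 p q r s (hF _ _ h1).1 (hF _ _ h2).1⟩
  have := hF p q hpq
  have := h.1 p q this.1
  omega

/-- max neighbour of a is j -/
def FNMax (a j : ℕ) (E : Finset (ℕ × ℕ)) : Prop := (a, j) ∈ E ∧ ∀ i, (a, i) ∈ E → i ≤ j

theorem FNMax.split {a b j : ℕ} {E : Finset (ℕ × ℕ)} (hv : FNValid a b E) (h : FNMax a j E)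
    {p q : ℕ} (hpq : (p, q) ∈ E) : q ≤ j ∨ j ≤ p := by
  by_contra hc
  push Not at hc
  have h1 := hv.1 p q hpq
  rcases Nat.eq_or_lt_of_le h1.1 with h2 | h2
  · subst h2
    have := h.2 q hpq
    omega
  · exact hv.2 a j p q h.1 hpq ⟨h2, hc.2, hc.1⟩

open Classical in
theorem FN_step1 {a b j : ℕ} (haj : a < j) (hjb : j ≤ b) :
    ∑ E ∈ (FNS a b).filter (FNMax a j), (Polynomial.X : Polynomial ℤ) ^ E.card
      = FND a j * FNW j b := by
  unfold FND FNW
  rw [Finset.sum_mul_sum, ← Finset.sum_product']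
  refine Finset.sum_bij' (fun E _ => (FNlo j E, FNhi j E)) (fun P _ => P.1 ∪ P.2) ?_ ?_ ?_ ?_ ?_
  · intro E hE
    rw [Finset.mem_filter, mem_FNS] at hE
    obtain ⟨⟨hv, hc⟩, hm⟩ := hE
    rw [Finset.mem_product, Finset.mem_filter, mem_FNS, mem_FNS]
    refine ⟨⟨⟨hv.sub fun p q h => ?_, ?_⟩, mem_FNlo.2 ⟨hm.1, le_rfl⟩⟩, hv.sub fun p q h => ?_, ?_⟩
    · rw [mem_FNlo] at h
      exact ⟨h.1, (hv.1 _ _ h.1).1, h.2⟩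
    · intro f hf x hax hxj
      have := hc (fun x => if x ≤ j then f x else f j) ?_ x hax (hxj.trans hjb)
      · simpa [hxj, haj.le] using this
      · intro p q hpq
        have h3 := hv.1 p q hpq
        rcases hm.split hv hpq with h | h
        · have := hf p q (mem_FNlo.2 ⟨hpq, h⟩)
          have h4 : p ≤ j := by omega
          simp [h, h4, this]
        · have h5 : ¬ q ≤ j := by omega
          rcases Nat.eq_or_lt_of_le h with h | h
          · subst h; simp [h5]
          · have h4 : ¬ p ≤ j := by omega
            simp [h5, h4]
    · rw [mem_FNhi] at h
      exact ⟨h.1, h.2, (hv.1 _ _ h.1).2.2⟩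
    · intro f hf x hjx hxb
      have key : ∀ x, a ≤ x → x ≤ b → ((if j ≤ x then f x else f j) ↔ _) :=
        hc (fun x => if j ≤ x then f x else f j) (by
          intro p q hpq
          have h3 := hv.1 p q hpq
          rcases hm.split hv hpq with h | h
          · have h4 : ¬ j ≤ p := by omega
            rcases Nat.eq_or_lt_of_le h with h | h
            · subst h; simp [h4]
            · have h5 : ¬ j ≤ q := by omega
              simp [h5, h4]
          · have := hf p q (mem_FNhi.2 ⟨hpq, h⟩)
            have h4 : j ≤ q := by omega
            simp [h, h4, this])
      have h1 := key x (by omega) hxb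
      have h2 := key j (by omega) hjb
      simp only [hjx, le_rfl, if_true] at h1 h2
      exact h1.trans h2.symm
  · rintro ⟨E, F⟩ h
    rw [Finset.mem_product, Finset.mem_filter, mem_FNS, mem_FNS] at h
    obtain ⟨⟨⟨hv1, hc1⟩, hm⟩, hv2, hc2⟩ := h
    dsimp only at *
    rw [Finset.mem_filter, mem_FNS]
    refine ⟨⟨⟨?_, ?_⟩, ?_⟩, ?_, ?_⟩
    · intro p q hpq
      rcases Finset.mem_union.1 hpq with h | h
      · have := hv1.1 p q h; omega
      · have := hv2.1 p q h; omega
    · intro p q r s h1 h2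
      rcases Finset.mem_union.1 h1 with h1 | h1 <;> rcases Finset.mem_union.1 h2 with h2 | h2
      · exact hv1.2 p q r s h1 h2
      · have := hv1.1 p q h1; have := hv2.1 r s h2; omega
      · have := hv2.1 p q h1; have := hv1.1 r s h2; omega
      · exact hv2.2 p q r s h1 h2
    · intro f hf x hax hxb
      have h1 := hc1 f (fun p q h => hf p q (Finset.mem_union_left _ h))
      have h2 := hc2 f (fun p q h => hf p q (Finset.mem_union_right _ h))
      rcases le_total x j with h | h
      · exact h1 x hax h
      · exact (h2 x h hxb).trans (h1 j haj.le le_rfl)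
    · exact Finset.mem_union_left _ hm
    · intro i hi
      rcases Finset.mem_union.1 hi with h | h
      · exact (hv1.1 _ _ h).2.2
      · have := hv2.1 _ _ h; omega
  · intro E hE
    rw [Finset.mem_filter, mem_FNS] at hE
    obtain ⟨⟨hv, hc⟩, hm⟩ := hE
    ext ⟨p, q⟩
    rw [Finset.mem_union, mem_FNlo, mem_FNhi]
    constructor
    · tauto
    · intro h
      have := hm.split hv h
      tauto
  · rintro ⟨E, F⟩ h
    rw [Finset.mem_product, Finset.mem_filter, mem_FNS, mem_FNS] at h
    obtain ⟨⟨⟨hv1, hc1⟩, hm⟩, hv2, hc2⟩ := h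
    dsimp only at *
    refine Prod.ext ?_ ?_
    · ext ⟨p, q⟩
      rw [mem_FNlo, Finset.mem_union]
      have := hv1.1 p q; have := hv2.1 p q
      constructor
      · rintro ⟨h | h, h'⟩
        · exact h
        · have := hv2.1 p q h; omega
      · intro h; exact ⟨Or.inl h, (hv1.1 p q h).2.2⟩
    · ext ⟨p, q⟩
      rw [mem_FNhi, Finset.mem_union]
      constructor
      · rintro ⟨h | h, h'⟩
        · have := hv1.1 p q h; omega
        · exact h
      · intro h; exact ⟨Or.inr h, (hv2.1 p q h).1⟩
  · intro E hE
    rw [Finset.mem_filter, mem_FNS] at hE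
    obtain ⟨⟨hv, hc⟩, hm⟩ := hE
    rw [← pow_add, ← Finset.card_union_of_disjoint]
    · congr 2
      ext ⟨p, q⟩
      rw [Finset.mem_union, mem_FNlo, mem_FNhi]
      have := @FNMax.split a b j E hv hm p q
      tauto
    · rw [Finset.disjoint_left]
      rintro ⟨p, q⟩ h1 h2
      rw [mem_FNlo] at h1
      rw [mem_FNhi] at h2
      have := hv.1 p q h1.1
      omega

open Classical in
theorem FN_rec1 {a b : ℕ} (hab : a < b) :
    FNW a b = ∑ j ∈ Finset.Ioc a b, FND a j * FNW j b := by
  have : ∀ j ∈ Finset.Ioc a b, FND a j * FNW j b =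
      ∑ E ∈ (FNS a b).filter (FNMax a j), (Polynomial.X : Polynomial ℤ) ^ E.card := by
    intro j hj
    rw [Finset.mem_Ioc] at hj
    exact (FN_step1 hj.1 hj.2).symm
  rw [Finset.sum_congr rfl this, ← Finset.sum_biUnion]
  · unfold FNW
    refine Finset.sum_congr ?_ fun _ _ => rfl
    ext E
    simp only [Finset.mem_biUnion, Finset.mem_filter, Finset.mem_Ioc]
    constructor
    · intro hE
      obtain ⟨hv, hc⟩ := mem_FNS.1 hE
      have hex : ∃ i, (a, i) ∈ E := by
        by_contra hno
        push Not at hno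
        have := hc (fun x => x = a) (by
          intro p q hpq
          have h1 := hv.1 p q hpq
          have : p ≠ a := by
            rintro rfl
            exact hno _ hpq
          constructor <;> intro <;> omega) b hab.le le_rfl
        simp at this
        omega
      have hb : ∀ i, (a, i) ∈ E → i ≤ b := fun i hi => (hv.1 _ _ hi).2.2
      obtain ⟨i, hi⟩ := hex
      have h1 := Nat.findGreatest_spec (P := fun i => (a, i) ∈ E) (hb i hi) hi
      refine ⟨Nat.findGreatest (fun i => (a, i) ∈ E) b, ⟨(hv.1 _ _ h1).2.1, (hv.1 _ _ h1).2.2⟩,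
        hE, h1, fun j hj => Nat.le_findGreatest (hb j hj) hj⟩
    · rintro ⟨j, _, h, _⟩
      exact h
  · intro i _ j _ hij
    rw [Function.onFun, Finset.disjoint_left]
    intro E h1 h2
    rw [Finset.mem_filter] at h1 h2
    exact hij (le_antisymm (h2.2.2 _ h1.2.1) (h1.2.2 _ h2.2.1))

/-- no edge other than (a,b) passes over the gap (i, i+1) -/
def FNCut (a b i : ℕ) (E : Finset (ℕ × ℕ)) : Prop :=
  ∀ p q, (p, q) ∈ E → (p, q) ≠ (a, b) → q ≤ i ∨ i + 1 ≤ p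

open Classical in
theorem FNCut.conn_lo {a b i : ℕ} (hai : a ≤ i) (hib : i < b) {E : Finset (ℕ × ℕ)}
    (hv : FNValid a b E) (hc : FNConn a b E) (hm : FNCut a b i E) : FNConn a i (FNlo i E) := by
  intro f hf x hax hxi
  have := hc (fun x => if x ≤ i then f x else f a) ?_ x hax (by omega)
  · simpa [hxi, hai] using this
  · intro p q hpq
    have h3 := hv.1 p q hpq
    by_cases he : (p, q) = (a, b)
    · rw [Prod.mk.injEq] at he
      obtain ⟨rfl, rfl⟩ := he
      have h4 : ¬ q ≤ i := by omega
      simp [h4]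
    rcases hm p q hpq he with h | h
    · have := hf p q (mem_FNlo.2 ⟨hpq, h⟩)
      have h4 : p ≤ i := by omega
      simp [h, h4, this]
    · have h5 : ¬ q ≤ i := by omega
      have h4 : ¬ p ≤ i := by omega
      simp [h5, h4]

open Classical in
theorem FNCut.conn_hi {a b i : ℕ} (hai : a ≤ i) (hib : i < b) {E : Finset (ℕ × ℕ)}
    (hv : FNValid a b E) (hc : FNConn a b E) (hm : FNCut a b i E) :
    FNConn (i + 1) b (FNhi (i + 1) E) := by
  intro f hf x hix hxb
  have key : ∀ x, a ≤ x → x ≤ b → ((if i + 1 ≤ x then f x else f b) ↔ _) :=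
    hc (fun x => if i + 1 ≤ x then f x else f b) (by
      intro p q hpq
      have h3 := hv.1 p q hpq
      by_cases he : (p, q) = (a, b)
      · rw [Prod.mk.injEq] at he
        obtain ⟨rfl, rfl⟩ := he
        have h4 : ¬ i + 1 ≤ p := by omega
        simp [h4]
      rcases hm p q hpq he with h | h
      · have h4 : ¬ i + 1 ≤ p := by omega
        have h5 : ¬ i + 1 ≤ q := by omega
        simp only [h5, h4, if_false]
      · have := hf p q (mem_FNhi.2 ⟨hpq, h⟩)
        have h4 : i + 1 ≤ q := by omega
        simp only [h, h4, this, if_true])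
  have h1 := key x (by omega) hxb
  have h2 := key (i + 1) (by omega) hib
  simp only [hix, le_rfl, if_true] at h1 h2
  exact h1.trans h2.symm

open Classical in
theorem FN_step2 {a b i : ℕ} (hai : a ≤ i) (hib : i < b) :
    ∑ E ∈ ((FNS a b).filter (fun E => (a, b) ∈ E)).filter (FNCut a b i),
      (Polynomial.X : Polynomial ℤ) ^ E.card = Polynomial.X * (FNW a i * FNW (i + 1) b) := by
  unfold FNW
  rw [Finset.sum_mul_sum, ← Finset.sum_product', Finset.mul_sum]
  have hun : ∀ E ∈ ((FNS a b).filter (fun E => (a, b) ∈ E)).filter (FNCut a b i),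
      insert (a, b) (FNlo i E ∪ FNhi (i + 1) E) = E := by
    intro E hE
    rw [Finset.mem_filter, Finset.mem_filter, mem_FNS] at hE
    obtain ⟨⟨⟨hv, hc⟩, he⟩, hm⟩ := hE
    ext ⟨p, q⟩
    rw [Finset.mem_insert, Finset.mem_union, mem_FNlo, mem_FNhi]
    constructor
    · rintro (h | h | h)
      · rw [h]; exact he
      · exact h.1
      · exact h.1
    · intro h
      by_cases h' : (p, q) = (a, b)
      · exact Or.inl h'
      · have := hm p q h h'
        tauto
  refine Finset.sum_bij' (fun E _ => (FNlo i E, FNhi (i + 1) E))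
    (fun P _ => insert (a, b) (P.1 ∪ P.2)) ?_ ?_ ?_ ?_ ?_
  · intro E hE
    rw [Finset.mem_filter, Finset.mem_filter, mem_FNS] at hE
    obtain ⟨⟨⟨hv, hc⟩, he⟩, hm⟩ := hE
    rw [Finset.mem_product, mem_FNS, mem_FNS]
    refine ⟨⟨hv.sub fun p q h => ?_, hm.conn_lo hai hib hv hc⟩, hv.sub fun p q h => ?_,
      hm.conn_hi hai hib hv hc⟩
    · rw [mem_FNlo] at h
      exact ⟨h.1, (hv.1 _ _ h.1).1, h.2⟩
    · rw [mem_FNhi] at h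
      exact ⟨h.1, h.2, (hv.1 _ _ h.1).2.2⟩
  · rintro ⟨E, F⟩ h
    rw [Finset.mem_product, mem_FNS, mem_FNS] at h
    obtain ⟨⟨hv1, hc1⟩, hv2, hc2⟩ := h
    dsimp only at *
    have hb : ∀ p q, (p, q) ∈ insert (a, b) (E ∪ F) →
        (p = a ∧ q = b) ∨ ((p, q) ∈ E ∧ a ≤ p ∧ p < q ∧ q ≤ i) ∨
          ((p, q) ∈ F ∧ i + 1 ≤ p ∧ p < q ∧ q ≤ b) := by
      intro p q h
      rw [Finset.mem_insert, Finset.mem_union, Prod.mk.injEq] at h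
      rcases h with h | h | h
      · exact Or.inl h
      · exact Or.inr (Or.inl ⟨h, hv1.1 p q h⟩)
      · exact Or.inr (Or.inr ⟨h, hv2.1 p q h⟩)
    rw [Finset.mem_filter, Finset.mem_filter, mem_FNS]
    refine ⟨⟨⟨⟨?_, ?_⟩, ?_⟩, Finset.mem_insert_self _ _⟩, ?_⟩
    · intro p q hpq
      have := hb p q hpq
      omega
    · intro p q r s h1 h2
      rcases hb _ _ h1 with h1 | h1 | h1 <;> rcases hb _ _ h2 with h2 | h2 | h2
      all_goals first
        | exact hv1.2 p q r s h1.1 h2.1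
        | exact hv2.2 p q r s h1.1 h2.1
        | omega
    · intro f hf x hax hxb
      have h1 := hc1 f (fun p q h => hf p q
        (Finset.mem_insert_of_mem (Finset.mem_union_left _ h)))
      have h2 := hc2 f (fun p q h => hf p q
        (Finset.mem_insert_of_mem (Finset.mem_union_right _ h)))
      have h3 := hf a b (Finset.mem_insert_self _ _)
      rcases Nat.lt_or_ge i x with h | h
      · exact (h2 x h hxb).trans ((h2 b hib le_rfl).symm.trans h3.symm)
      · exact h1 x hax h
    · intro p q hpq hne
      rw [Ne, Prod.mk.injEq] at hne
      have := hb p q hpq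
      omega
  · intro E hE
    exact hun E hE
  · rintro ⟨E, F⟩ h
    rw [Finset.mem_product, mem_FNS, mem_FNS] at h
    obtain ⟨⟨hv1, hc1⟩, hv2, hc2⟩ := h
    dsimp only at *
    refine Prod.ext ?_ ?_
    · ext ⟨p, q⟩
      rw [mem_FNlo, Finset.mem_insert, Finset.mem_union, Prod.mk.injEq]
      constructor
      · rintro ⟨h | h | h, h'⟩
        · omega
        · exact h
        · have := hv2.1 p q h; omega
      · intro h; exact ⟨Or.inr (Or.inl h), (hv1.1 p q h).2.2⟩
    · ext ⟨p, q⟩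
      rw [mem_FNhi, Finset.mem_insert, Finset.mem_union, Prod.mk.injEq]
      constructor
      · rintro ⟨h | h | h, h'⟩
        · omega
        · have := hv1.1 p q h; omega
        · exact h
      · intro h; exact ⟨Or.inr (Or.inr h), (hv2.1 p q h).1⟩
  · intro E hE
    have h := hun E hE
    rw [Finset.mem_filter, Finset.mem_filter, mem_FNS] at hE
    obtain ⟨⟨⟨hv, hc⟩, he⟩, hm⟩ := hE
    dsimp only
    rw [← pow_add, ← Finset.card_union_of_disjoint, ← pow_succ']
    · conv_lhs => rw [← h]
      rw [Finset.card_insert_of_notMem]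
      rw [Finset.mem_union, mem_FNlo, mem_FNhi]
      omega
    · rw [Finset.disjoint_left]
      rintro ⟨p, q⟩ h1 h2
      rw [mem_FNlo] at h1
      rw [mem_FNhi] at h2
      have := hv.1 p q h1.1
      omega

theorem FN_exists_cut {a b : ℕ} {E : Finset (ℕ × ℕ)} (hab : a < b)
    (hv : FNValid a b E) (hc : FNConn a b E) (he : (a, b) ∈ E)
    (hn : ¬ FNConn a b (E.erase (a, b))) : ∃ i, a ≤ i ∧ i < b ∧ FNCut a b i E := by
  classical
  set C : ℕ → Prop := fun x => ∀ f : ℕ → Prop,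
    (∀ p q, (p, q) ∈ E.erase (a, b) → (f p ↔ f q)) → (f x ↔ f a) with hC
  have hCa : C a := fun f _ => Iff.rfl
  have hCe : ∀ p q, (p, q) ∈ E.erase (a, b) → (C p ↔ C q) := by
    intro p q hpq
    constructor
    · intro h f hf
      exact (hf p q hpq).symm.trans (h f hf)
    · intro h f hf
      exact (hf p q hpq).trans (h f hf)
  have hCb : ¬ C b := by
    intro hb
    apply hn
    intro f hf
    apply hc f
    intro p q hpq
    by_cases h : (p, q) = (a, b)
    · rw [Prod.mk.injEq] at h
      rw [h.1, h.2]
      exact (hb f hf).symm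
    · exact hf p q (Finset.mem_erase.2 ⟨h, hpq⟩)
  set i := Nat.findGreatest C b with hi
  have hai : a ≤ i := Nat.le_findGreatest hab.le hCa
  have hCi : C i := Nat.findGreatest_spec hab.le hCa
  have hmax : ∀ x, i < x → x ≤ b → ¬ C x := fun x h1 h2 => Nat.findGreatest_is_greatest h1 h2
  have hib : i < b := by
    rcases Nat.eq_or_lt_of_le (Nat.findGreatest_le (P := C) b) with h | h
    · rw [← hi] at h
      rw [h] at hCi
      exact absurd hCi hCb
    · exact h
  refine ⟨i, hai, hib, ?_⟩
  intro r s hrs hne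
  by_contra hcon
  have hrs' := Finset.mem_erase.2 ⟨hne, hrs⟩
  have hb := hv.1 r s hrs
  have hCs : ¬ C s := hmax s (by omega) hb.2.2
  have hCr : ¬ C r := fun h => hCs ((hCe r s hrs').1 h)
  have hri : r ≠ i := by
    rintro rfl
    exact hCr hCi
  have h := hCi (fun x => C x ∧ r < x ∧ x < s) (by
    intro p q hpq
    have h1 := hCe p q hpq
    have hpq' := Finset.mem_of_mem_erase hpq
    by_cases hp : C p
    · have hq := h1.1 hp
      have n1 : p ≠ r := by rintro rfl; exact hCr hp
      have n2 : p ≠ s := by rintro rfl; exact hCs hp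
      have n3 : q ≠ r := by rintro rfl; exact hCr hq
      have n4 : q ≠ s := by rintro rfl; exact hCs hq
      have c1 := hv.2 p q r s hpq' hrs
      have c2 := hv.2 r s p q hrs hpq'
      have := hv.1 p q hpq'
      simp only [hp, hq, true_and]
      omega
    · have hq : ¬ C q := fun h => hp (h1.2 h)
      simp only [hp, hq, false_and])
  have h' := h.1 ⟨hCi, by omega, by omega⟩
  omega

theorem FNCut.unique_lt {a b i j : ℕ} {E : Finset (ℕ × ℕ)} (hai : a ≤ i) (hij : i < j) (hj : j < b)
    (hv : FNValid a b E) (hc : FNConn a b E)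
    (hi : FNCut a b i E) (hj' : FNCut a b j E) : False := by
  have h := hj'.conn_lo (by omega) hj hv hc (fun x => x ≤ i) (by
    intro p q hpq
    rw [mem_FNlo] at hpq
    have h1 := hv.1 p q hpq.1
    have := hi p q hpq.1 (by rw [Ne, Prod.mk.injEq]; omega)
    omega) j (by omega) le_rfl
  omega

theorem FNCut.not_conn {a b i : ℕ} {E : Finset (ℕ × ℕ)} (hai : a ≤ i) (hib : i < b)
    (hv : FNValid a b E) (hi : FNCut a b i E) : ¬ FNConn a b (E.erase (a, b)) := by
  intro hc
  have h := hc (fun x => x ≤ i) (by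
    intro p q hpq
    rw [Finset.mem_erase] at hpq
    have h1 := hv.1 p q hpq.2
    have := hi p q hpq.2 hpq.1
    omega) b (by omega) le_rfl
  omega

open Classical in
theorem FN_step3 {a b : ℕ} (hab : a < b) :
    ∑ E ∈ ((FNS a b).filter (fun E => (a, b) ∈ E)).filter (fun E => FNConn a b (E.erase (a, b))),
      (Polynomial.X : Polynomial ℤ) ^ E.card = Polynomial.X * (FNW a b - FND a b) := by
  have h1 : FNW a b - FND a b =
      ∑ E ∈ (FNS a b).filter (fun E => ¬ (a, b) ∈ E), Polynomial.X ^ E.card := by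
    unfold FNW FND
    rw [← Finset.sum_filter_add_sum_filter_not (FNS a b) (fun E => (a, b) ∈ E)]
    ring
  rw [h1, Finset.mul_sum]
  refine Finset.sum_bij' (fun E _ => E.erase (a, b)) (fun E _ => insert (a, b) E) ?_ ?_ ?_ ?_ ?_
  · intro E hE
    rw [Finset.mem_filter, Finset.mem_filter, mem_FNS] at hE
    obtain ⟨⟨⟨hv, hc⟩, he⟩, hm⟩ := hE
    rw [Finset.mem_filter, mem_FNS]
    refine ⟨⟨hv.sub fun p q h => ?_, hm⟩, by simp⟩
    have h := Finset.mem_of_mem_erase h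
    exact ⟨h, (hv.1 _ _ h).1, (hv.1 _ _ h).2.2⟩
  · intro E hE
    rw [Finset.mem_filter, mem_FNS] at hE
    obtain ⟨⟨hv, hc⟩, he⟩ := hE
    rw [Finset.mem_filter, Finset.mem_filter, mem_FNS, Finset.erase_insert he]
    refine ⟨⟨⟨⟨?_, ?_⟩, ?_⟩, Finset.mem_insert_self _ _⟩, hc⟩
    · intro p q h
      rw [Finset.mem_insert, Prod.mk.injEq] at h
      rcases h with h | h
      · omega
      · exact hv.1 p q h
    · intro p q r s h1 h2
      rw [Finset.mem_insert, Prod.mk.injEq] at h1 h2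
      rcases h1 with h1 | h1 <;> rcases h2 with h2 | h2
      · omega
      · have := hv.1 r s h2; omega
      · have := hv.1 p q h1; omega
      · exact hv.2 p q r s h1 h2
    · intro f hf
      exact hc f fun p q h => hf p q (Finset.mem_insert_of_mem h)
  · intro E hE
    rw [Finset.mem_filter, Finset.mem_filter] at hE
    exact Finset.insert_erase hE.1.2
  · intro E hE
    rw [Finset.mem_filter] at hE
    exact Finset.erase_insert hE.2
  · intro E hE
    rw [Finset.mem_filter, Finset.mem_filter] at hE
    rw [← pow_succ', Finset.card_erase_add_one hE.1.2]

open Classical in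
theorem FN_rec2 {a b : ℕ} (hab : a < b) :
    FND a b = Polynomial.X * (FNW a b - FND a b) +
      Polynomial.X * ∑ i ∈ Finset.Ico a b, FNW a i * FNW (i + 1) b := by
  rw [← FN_step3 hab, Finset.mul_sum]
  have : ∀ i ∈ Finset.Ico a b, Polynomial.X * (FNW a i * FNW (i + 1) b) =
      ∑ E ∈ ((FNS a b).filter (fun E => (a, b) ∈ E)).filter (FNCut a b i),
      (Polynomial.X : Polynomial ℤ) ^ E.card := by
    intro i hi
    rw [Finset.mem_Ico] at hi
    exact (FN_step2 hi.1 hi.2).symm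
  rw [Finset.sum_congr rfl this, ← Finset.sum_biUnion]
  · unfold FND
    rw [← Finset.sum_filter_add_sum_filter_not ((FNS a b).filter (fun E => (a, b) ∈ E))
      (fun E => FNConn a b (E.erase (a, b)))]
    congr 1
    refine Finset.sum_congr ?_ fun _ _ => rfl
    ext E
    simp only [Finset.mem_biUnion, Finset.mem_filter, Finset.mem_Ico, mem_FNS]
    constructor
    · rintro ⟨⟨⟨hv, hc⟩, he⟩, hn⟩
      obtain ⟨i, h1, h2, h3⟩ := FN_exists_cut hab hv hc he hn
      exact ⟨i, ⟨h1, h2⟩, ⟨⟨hv, hc⟩, he⟩, h3⟩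
    · rintro ⟨i, ⟨h1, h2⟩, ⟨⟨hv, hc⟩, he⟩, h3⟩
      exact ⟨⟨⟨hv, hc⟩, he⟩, h3.not_conn h1 h2 hv⟩
  · intro i hi j hj hij
    rw [Function.onFun, Finset.disjoint_left]
    intro E h1 h2
    rw [Finset.mem_filter, Finset.mem_filter, mem_FNS] at h1 h2
    rw [Finset.mem_coe, Finset.mem_Ico] at hi hj
    rcases lt_or_gt_of_ne hij with h | h
    · exact FNCut.unique_lt hi.1 h hj.2 h1.1.1.1 h1.1.1.2 h1.2 h2.2
    · exact FNCut.unique_lt hj.1 h hi.2 h1.1.1.1 h1.1.1.2 h2.2 h1.2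

/-- shift an edge set by one -/
def FNshift : Finset (ℕ × ℕ) ↪ Finset (ℕ × ℕ) :=
  Finset.mapEmbedding ((⟨Nat.succ, Nat.succ_injective⟩ : ℕ ↪ ℕ).prodMap
    ⟨Nat.succ, Nat.succ_injective⟩) |>.toEmbedding

theorem card_FNshift (E : Finset (ℕ × ℕ)) : (FNshift E).card = E.card := by
  simp [FNshift, Finset.mapEmbedding_apply]

theorem mem_FNshift {E : Finset (ℕ × ℕ)} {p q : ℕ} :
    (p + 1, q + 1) ∈ FNshift E ↔ (p, q) ∈ E := by
  simp [FNshift, Finset.mapEmbedding_apply]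

theorem mem_FNshift' {E : Finset (ℕ × ℕ)} {p q : ℕ} :
    (p, q) ∈ FNshift E ↔ ∃ p' q', p = p' + 1 ∧ q = q' + 1 ∧ (p', q') ∈ E := by
  simp only [FNshift, Finset.mapEmbedding_apply, RelEmbedding.coe_toEmbedding, Finset.mem_map,
    Prod.exists, Function.Embedding.coe_prodMap, Prod.map_apply, Function.Embedding.coeFn_mk,
    Prod.mk.injEq, Nat.succ_eq_add_one]
  constructor
  · rintro ⟨x, y, h, rfl, rfl⟩; exact ⟨x, y, rfl, rfl, h⟩
  · rintro ⟨x, y, rfl, rfl, h⟩; exact ⟨x, y, h, rfl, rfl⟩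

theorem FNS_shift (a b : ℕ) : FNS (a + 1) (b + 1) = (FNS a b).map FNshift := by
  ext E
  rw [Finset.mem_map, mem_FNS]
  constructor
  · rintro ⟨hv, hc⟩
    refine ⟨E.image (fun e => (e.1 - 1, e.2 - 1)), ?_, ?_⟩
    · have key : ∀ p q, (p, q) ∈ E.image (fun e => (e.1 - 1, e.2 - 1)) ↔ (p + 1, q + 1) ∈ E := by
        intro p q
        simp only [Finset.mem_image, Prod.exists, Prod.mk.injEq]
        constructor
        · rintro ⟨x, y, h, rfl, rfl⟩
          have := hv.1 x y h
          rwa [show x - 1 + 1 = x by omega, show y - 1 + 1 = y by omega]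
        · intro h
          exact ⟨_, _, h, by omega, by omega⟩
      rw [mem_FNS]
      refine ⟨⟨?_, ?_⟩, ?_⟩
      · intro p q h
        have := hv.1 _ _ ((key p q).1 h)
        omega
      · intro p q r s h1 h2
        have := hv.2 _ _ _ _ ((key p q).1 h1) ((key r s).1 h2)
        omega
      · intro f hf x hx hxb
        have := hc (fun x => f (x - 1)) (by
          intro p q hpq
          have h := hv.1 p q hpq
          apply hf
          rw [key]
          rwa [show p - 1 + 1 = p by omega, show q - 1 + 1 = q by omega]) (x + 1)
          (by omega) (by omega)
        simpa using this
    · ext ⟨p, q⟩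
      rw [mem_FNshift']
      simp only [Finset.mem_image, Prod.exists, Prod.mk.injEq]
      constructor
      · rintro ⟨p', q', rfl, rfl, x, y, h, rfl, rfl⟩
        have := hv.1 x y h
        rwa [show x - 1 + 1 = x by omega, show y - 1 + 1 = y by omega]
      · intro h
        have := hv.1 p q h
        exact ⟨p - 1, q - 1, by omega, by omega, p, q, h, rfl, rfl⟩
  · rintro ⟨F, hF, rfl⟩
    obtain ⟨hv, hc⟩ := mem_FNS.1 hF
    refine ⟨⟨?_, ?_⟩, ?_⟩
    · intro p q h
      obtain ⟨p', q', rfl, rfl, h'⟩ := mem_FNshift'.1 h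
      have := hv.1 _ _ h'
      omega
    · intro p q r s h1 h2
      obtain ⟨p', q', rfl, rfl, h1'⟩ := mem_FNshift'.1 h1
      obtain ⟨r', s', rfl, rfl, h2'⟩ := mem_FNshift'.1 h2
      have := hv.2 _ _ _ _ h1' h2'
      omega
    · intro f hf x hax hxb
      have := hc (fun x => f (x + 1)) (fun p q h => hf _ _ (mem_FNshift.2 h)) (x - 1) (by omega)
        (by omega)
      simpa [show x - 1 + 1 = x by omega] using this

theorem FNW_shift (a b : ℕ) : FNW (a + 1) (b + 1) = FNW a b := by
  unfold FNW
  rw [FNS_shift, Finset.sum_map]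
  simp [card_FNshift]

theorem FNW_shift' (a m : ℕ) : FNW a (a + m) = FNW 0 m := by
  induction a with
  | zero => simp
  | succ a ih => rw [← ih, show a + 1 + m = (a + m) + 1 by ring, FNW_shift]

theorem FNW_zero : FNW 0 0 = 1 := by
  unfold FNW
  have : FNS 0 0 = {∅} := by
    ext E
    rw [mem_FNS, Finset.mem_singleton]
    constructor
    · rintro ⟨hv, _⟩
      rw [Finset.eq_empty_iff_forall_notMem]
      rintro ⟨p, q⟩ h
      have := hv.1 p q h
      omega
    · rintro rfl
      refine ⟨⟨by simp, by simp⟩, ?_⟩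
      intro f _ x _ h
      rw [Nat.le_zero.1 h]
  rw [this]
  simp

theorem FND_zero : FND 0 0 = 0 := by
  classical
  unfold FND
  apply Finset.sum_eq_zero
  intro E hE
  rw [Finset.mem_filter, mem_FNS] at hE
  have := hE.1.1.1 _ _ hE.2
  omega


open PowerSeries in
/-- The Lagrange functional. -/
noncomputable def FNL {R : Type*} [CommRing R] (φ : PowerSeries R) (m : ℕ) (H : PowerSeries R) : R :=
  if m = 0 then constantCoeff H
  else coeff m (H * (φ ^ (m - 1) * (φ - X * derivative R φ)))

open PowerSeries in
theorem FNL_zero {R : Type*} [CommRing R] (φ H : PowerSeries R) : FNL φ 0 H = constantCoeff H := by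
  simp [FNL]

open PowerSeries in
theorem FNL_succ {R : Type*} [CommRing R] (φ H : PowerSeries R) (m : ℕ) :
    FNL φ (m + 1) H = coeff (m + 1) (H * (φ ^ m * (φ - X * derivative R φ))) := by
  simp [FNL]

open PowerSeries in
theorem FN_pow_deriv {R : Type*} [CommRing R] (φ : PowerSeries R) (m : ℕ) (j : ℕ) :
    ((m : R) + 1) * coeff j (φ ^ m * (φ - X * derivative R φ)) =
      ((m : R) + 1 - j) * coeff j (φ ^ (m + 1)) := by
  have h : ((m : PowerSeries R) + 1) * (φ ^ m * (φ - X * derivative R φ)) =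
      ((m : PowerSeries R) + 1) * φ ^ (m + 1) - X * derivative R (φ ^ (m + 1)) := by
    rw [Derivation.leibniz_pow]
    simp only [smul_eq_mul, nsmul_eq_mul, Nat.add_sub_cancel]
    push_cast
    ring
  have h2 := congrArg (coeff j) h
  have e : ((m : PowerSeries R) + 1) = C ((m : R) + 1) := by simp
  rw [e, map_sub, coeff_C_mul, coeff_C_mul] at h2
  rw [h2]
  cases j with
  | zero => simp
  | succ j =>
    rw [coeff_succ_X_mul, coeff_derivative]
    push_cast
    ring

open PowerSeries in
/-- Lagrange inversion. -/
theorem FN_lagrange_aux {R : Type*} [CommRing R] [IsDomain R] [CharZero R] (φ Y : PowerSeries R)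
    (hY0 : constantCoeff Y = 0) (hY : Y = X * φ.subst Y) (m : ℕ) :
    ∀ H : PowerSeries R, coeff m (H.subst Y) = FNL φ m H := by
  have hs : HasSubst Y := HasSubst.of_constantCoeff_zero' hY0
  have dec : ∀ H : PowerSeries R, ∃ H₁ : PowerSeries R,
      H = C (constantCoeff H) + X * H₁ := by
    intro H
    refine ⟨PowerSeries.mk fun n => coeff (n + 1) H, ?_⟩
    ext n
    cases n with
    | zero => simp
    | succ n => simp [coeff_succ_X_mul, coeff_C]
  have step : ∀ H₁ : PowerSeries R, (X * H₁).subst Y = X * (φ * H₁).subst Y := by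
    intro H₁
    rw [subst_mul hs, subst_mul hs, subst_X hs]
    calc Y * H₁.subst Y = (X * φ.subst Y) * H₁.subst Y := by rw [← hY]
      _ = _ := by ring
  have hC : ∀ r : R, (C r).subst Y = (C r : PowerSeries R) := fun r => subst_C r
  induction m with
  | zero =>
    intro H
    obtain ⟨H₁, h⟩ := dec H
    rw [FNL_zero, h, subst_add hs, step, hC]
    simp
  | succ m ih =>
    intro H
    obtain ⟨H₁, h⟩ := dec H
    rw [h, subst_add hs, step, hC, map_add, coeff_succ_X_mul, ih, FNL_succ, add_mul, map_add,
      coeff_C_mul, mul_assoc, coeff_succ_X_mul]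
    have h0 : coeff (m + 1) (φ ^ m * (φ - X * derivative R φ)) = 0 := by
      have := FN_pow_deriv φ m (m + 1)
      push_cast at this
      rw [sub_self, zero_mul] at this
      exact (mul_eq_zero.1 this).resolve_left (by exact_mod_cast Nat.succ_ne_zero m)
    rw [h0]
    cases m with
    | zero =>
      simp [FNL_zero, coeff_C, mul_comm]
    | succ m =>
      rw [FNL_succ]
      simp only [coeff_C, Nat.succ_ne_zero, if_false, mul_zero]
      congr 2
      ring

open PowerSeries in
theorem FN_lagrange {R : Type*} [CommRing R] [IsDomain R] [CharZero R] (φ Y : PowerSeries R)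
    (hY0 : constantCoeff Y = 0) (hY : Y = X * φ.subst Y) (m : ℕ) :
    ((m : R) + 1) * coeff (m + 1) Y = coeff m (φ ^ (m + 1)) := by
  have hs : HasSubst Y := HasSubst.of_constantCoeff_zero' hY0
  have h := FN_lagrange_aux φ Y hY0 hY (m + 1) X
  rw [subst_X hs, FNL_succ, coeff_succ_X_mul] at h
  rw [h, FN_pow_deriv]
  ring

open PowerSeries in
/-- from the algebraic equation -/
theorem FN_coeff {R : Type*} [CommRing R] [IsDomain R] [CharZero R] (w : R) (Y : PowerSeries R)
    (hY0 : constantCoeff Y = 0) (hY : Y * (1 - C w * Y) = X * (C w * (1 + Y) ^ 3)) (m : ℕ) :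
    ((m : R) + 1) * coeff (m + 1) Y = ∑ p ∈ Finset.HasAntidiagonal.antidiagonal m,
      ((3 * (m + 1)).choose p.1 : R) * ((m + p.2).choose m : R) * w ^ (p.2 + m + 1) := by
  have hs : HasSubst Y := HasSubst.of_constantCoeff_zero' hY0
  set ι : PowerSeries R := rescale w (PowerSeries.mk 1) with hι
  have h1 : ι * (1 - C w * X) = 1 := by
    have := congrArg (rescale w) (mk_one_mul_one_sub_eq_one R)
    rw [map_mul, map_sub, map_one, rescale_X] at this
    exact this
  have hC : ∀ r : R, (C r).subst Y = (C r : PowerSeries R) := fun r => subst_C r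
  have hone : (1 : PowerSeries R).subst Y = (1 : PowerSeries R) := by
    simpa using hC 1
  have h2 : ι.subst Y * (1 - C w * Y) = 1 := by
    have := congrArg (fun H : PowerSeries R => H.subst Y) h1
    simp only [subst_mul hs, subst_sub hs, hone, hC, subst_X hs] at this
    exact this
  have h3 : Y = X * (C w * (1 + X) ^ 3 * ι).subst Y := by
    simp only [subst_mul hs, subst_pow hs, subst_add hs, hone, hC, subst_X hs]
    calc Y = Y * (ι.subst Y * (1 - C w * Y)) := by rw [h2, mul_one]
      _ = ι.subst Y * (Y * (1 - C w * Y)) := by ring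
      _ = _ := by rw [hY]; ring
  rw [FN_lagrange _ Y hY0 h3]
  have h4 : (C w * (1 + X) ^ 3 * ι) ^ (m + 1) =
      C (w ^ (m + 1)) * ((((1 + Polynomial.X : Polynomial R) ^ (3 * (m + 1)) : Polynomial R) : PowerSeries R) *
        rescale w (PowerSeries.mk fun n => ((m + n).choose m : R))) := by
    rw [← mk_one_pow_eq_mk_choose_add, map_pow]
    simp only [Polynomial.coe_pow, Polynomial.coe_add, Polynomial.coe_one, Polynomial.coe_X]
    rw [mul_pow, mul_pow, ← pow_mul, map_pow]
    ring
  rw [h4, coeff_C_mul, coeff_mul, Finset.mul_sum]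
  refine Finset.sum_congr rfl fun p _ => ?_
  rw [Polynomial.coeff_coe, Polynomial.coeff_one_add_X_pow, coeff_rescale, coeff_mk]
  ring

open PowerSeries in
theorem FN_main (m : ℕ) :
    ((m : Polynomial ℤ) + 1) * FNW 0 (m + 1) = ∑ p ∈ Finset.HasAntidiagonal.antidiagonal m,
      ((3 * (m + 1)).choose p.1 : Polynomial ℤ) * ((m + p.2).choose m : Polynomial ℤ) *
        Polynomial.X ^ (p.2 + m + 1) := by
  set A : PowerSeries (Polynomial ℤ) := PowerSeries.mk (FNW 0) with hA
  set D : PowerSeries (Polynomial ℤ) := PowerSeries.mk (FND 0) with hD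
  set w : Polynomial ℤ := Polynomial.X with hw
  have e1 : A = 1 + D * A := by
    ext1 n
    rw [map_add, coeff_mul, coeff_mk, Finset.Nat.sum_antidiagonal_eq_sum_range_succ_mk]
    simp only [hD, hA, coeff_mk]
    cases n with
    | zero => simp [FNW_zero, FND_zero]
    | succ n =>
      rw [FN_rec1 (Nat.succ_pos n), Finset.sum_range_succ', FND_zero]
      simp only [coeff_one, Nat.succ_ne_zero, if_false, zero_mul, add_zero, zero_add]
      rw [Finset.range_eq_Ico, Finset.sum_Ico_add' (fun j => FND 0 j * FNW 0 (n + 1 - j))]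
      refine Finset.sum_congr ?_ fun j hj => ?_
      · ext j; simp only [Finset.mem_Ioc, Finset.mem_Ico]; omega
      · rw [Finset.mem_Ico] at hj
        rw [← FNW_shift' j (n + 1 - j), show j + (n + 1 - j) = n + 1 by omega]
  have e2 : D = C w * (A - 1 - D) + C w * (X * (A * A)) := by
    ext1 n
    cases n with
    | zero =>
      simp [hA, hD, FNW_zero, FND_zero]
    | succ n =>
      rw [map_add, coeff_C_mul, coeff_C_mul, coeff_succ_X_mul, coeff_mul,
        Finset.Nat.sum_antidiagonal_eq_sum_range_succ_mk]
      simp only [hD, hA, coeff_mk, map_sub, coeff_one, Nat.succ_ne_zero, if_false, sub_zero]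
      have hs : ∑ i ∈ Finset.Ico 0 (n + 1), FNW 0 i * FNW (i + 1) (n + 1) =
          ∑ i ∈ Finset.range n.succ, FNW 0 i * FNW 0 (n - i) := by
        rw [Nat.succ_eq_add_one, ← Finset.range_eq_Ico]
        refine Finset.sum_congr rfl fun j hj => ?_
        rw [Finset.mem_range] at hj
        rw [← FNW_shift' (j + 1) (n - j), show j + 1 + (n - j) = n + 1 by omega]
      have hr := FN_rec2 (Nat.succ_pos n)
      rw [Nat.succ_eq_add_one, hs] at hr
      exact hr
  clear_value w
  have hA0 : coeff 0 A = 1 := by simp [hA, FNW_zero]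
  have hAm : coeff (m + 1) A = FNW 0 (m + 1) := by simp [hA]
  clear_value A D
  have hY : (A - 1) * (1 - C w * (A - 1)) = X * (C w * (1 + (A - 1)) ^ 3) := by
    linear_combination (1 + C w) * e1 + A * e2
  have h0 : constantCoeff (A - 1) = 0 := by
    rw [← coeff_zero_eq_constantCoeff_apply, map_sub]
    rw [hA0]; simp
  have h := FN_coeff w (A - 1) h0 hY m
  rw [← h, map_sub, hAm]
  simp [coeff_one]

theorem FNW_coeff (m k : ℕ) :
    (FNW 0 m).coeff k = (((FNS 0 m).filter (fun E => E.card = k)).card : ℤ) := by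
  unfold FNW
  rw [Polynomial.finsetSum_coeff]
  simp only [Polynomial.coeff_X_pow]
  rw [Finset.card_filter]
  push_cast
  exact Finset.sum_congr rfl fun E _ => by simp [eq_comm]

theorem FN_count (m k : ℕ) (h1 : m + 1 ≤ k) (h2 : k ≤ 2 * m + 1) :
    (m + 1) * ((FNS 0 (m + 1)).filter (fun E => E.card = k)).card =
      (3 * (m + 1)).choose (m + 2 + k) * (k - 1).choose m := by
  have h := congrArg (fun P : Polynomial ℤ => P.coeff k) (FN_main m)
  rw [show ((m : Polynomial ℤ) + 1) = Polynomial.C ((m : ℤ) + 1) by simp, Polynomial.coeff_C_mul,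
    FNW_coeff, Polynomial.finsetSum_coeff, Finset.sum_eq_single (2 * m + 1 - k, k - m - 1)] at h
  · rw [← Polynomial.C_eq_natCast, ← Polynomial.C_eq_natCast, ← Polynomial.C_mul,
      Polynomial.coeff_C_mul, Polynomial.coeff_X_pow] at h
    dsimp only at h
    rw [if_pos (by omega), mul_one, ← Nat.choose_symm (by omega),
      show 3 * (m + 1) - (2 * m + 1 - k) = m + 2 + k by omega,
      show m + (k - m - 1) = k - 1 by omega] at h
    exact_mod_cast h
  · rintro ⟨p, q⟩ hpq hne
    rw [Finset.HasAntidiagonal.mem_antidiagonal] at hpq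
    rw [← Polynomial.C_eq_natCast, ← Polynomial.C_eq_natCast, ← Polynomial.C_mul,
      Polynomial.coeff_C_mul, Polynomial.coeff_X_pow, if_neg, mul_zero]
    intro hk
    apply hne
    rw [Prod.mk.injEq]
    omega
  · intro hn
    exfalso
    apply hn
    rw [Finset.HasAntidiagonal.mem_antidiagonal]
    dsimp only
    omega

/-- an unordered pair as a sorted pair of naturals -/
def FNpair {n : ℕ} (e : Sym2 (Fin n)) : ℕ × ℕ := (e.inf.val, e.sup.val)

theorem FNpair_mk {n : ℕ} {a b : Fin n} (h : a ≤ b) : FNpair s(a, b) = (a.val, b.val) := by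
  simp [FNpair, h]

theorem FN_exists_sorted {n : ℕ} (e : Sym2 (Fin n)) : ∃ a b : Fin n, a ≤ b ∧ e = s(a, b) := by
  induction e using Sym2.ind with
  | _ a b =>
    rcases le_total a b with h | h
    · exact ⟨a, b, h, rfl⟩
    · exact ⟨b, a, h, Sym2.eq_swap⟩

theorem FNpair_inj {n : ℕ} : Function.Injective (FNpair (n := n)) := by
  intro e f h
  obtain ⟨a, b, hab, rfl⟩ := FN_exists_sorted e
  obtain ⟨c, d, hcd, rfl⟩ := FN_exists_sorted f
  rw [FNpair_mk hab, FNpair_mk hcd, Prod.mk.injEq] at h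
  rw [Fin.ext h.1, Fin.ext h.2]

theorem FNpair_mem {n : ℕ} {E : Finset (Sym2 (Fin n))} {p q : ℕ} (hd : ∀ e ∈ E, ¬ e.IsDiag) :
    (p, q) ∈ E.image FNpair ↔ ∃ a b : Fin n, a.val = p ∧ b.val = q ∧ a < b ∧ s(a, b) ∈ E := by
  rw [Finset.mem_image]
  constructor
  · rintro ⟨e, he, h⟩
    obtain ⟨a, b, hab, rfl⟩ := FN_exists_sorted e
    rw [FNpair_mk hab, Prod.mk.injEq] at h
    have := hd _ he
    rw [Sym2.mk_isDiag_iff] at this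
    exact ⟨a, b, h.1, h.2, lt_of_le_of_ne hab this, he⟩
  · rintro ⟨a, b, rfl, rfl, hab, h⟩
    exact ⟨_, h, FNpair_mk hab.le⟩

theorem FN_conn_iff {n : ℕ} {E : Finset (Sym2 (Fin (n + 1)))} (hd : ∀ e ∈ E, ¬ e.IsDiag) :
    (graphOf E).Connected ↔ FNConn 0 n (E.image FNpair) := by
  classical
  constructor
  · intro hc f hf x _ hx
    have key : ∀ u v : Fin (n + 1), (graphOf E).Reachable u v → (f u.val ↔ f v.val) := by
      rintro u v ⟨p⟩
      induction p with
      | nil => exact Iff.rfl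
      | @cons u v w h p ih =>
        refine Iff.trans ?_ ih
        rw [graphOf, SimpleGraph.fromEdgeSet_adj] at h
        rcases lt_or_gt_of_ne h.2 with hl | hl
        · exact hf _ _ ((FNpair_mem hd).2 ⟨u, v, rfl, rfl, hl, h.1⟩)
        · exact (hf _ _ ((FNpair_mem hd).2 ⟨v, u, rfl, rfl, hl, by
            rw [Sym2.eq_swap]; exact h.1⟩)).symm
    exact key ⟨x, by omega⟩ 0 (hc.preconnected _ _)
  · intro hc
    have key : ∀ v : Fin (n + 1), (graphOf E).Reachable 0 v := by
      intro v
      have := hc (fun x => ∃ h : x < n + 1, (graphOf E).Reachable 0 ⟨x, h⟩) (by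
        intro p q hpq
        obtain ⟨a, b, rfl, rfl, hab, h⟩ := (FNpair_mem hd).1 hpq
        have hadj : (graphOf E).Adj a b := by
          rw [graphOf, SimpleGraph.fromEdgeSet_adj]
          exact ⟨h, hab.ne⟩
        constructor
        · rintro ⟨_, h1⟩
          exact ⟨b.2, h1.trans hadj.reachable⟩
        · rintro ⟨_, h1⟩
          exact ⟨a.2, h1.trans hadj.symm.reachable⟩) v.val (Nat.zero_le _) (by omega)
      obtain ⟨_, h⟩ := this.2 ⟨Nat.succ_pos n, SimpleGraph.Reachable.refl _⟩
      exact h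
    haveI : Nonempty (Fin (n + 1)) := ⟨0⟩
    exact ⟨fun u v => (key u).symm.trans (key v)⟩

theorem FN_valid_of {n : ℕ} {E : Finset (Sym2 (Fin (n + 1)))} (h : IsNC E) :
    FNValid 0 n (E.image FNpair) := by
  refine ⟨?_, ?_⟩
  · intro p q hpq
    obtain ⟨a, b, rfl, rfl, hab, h⟩ := (FNpair_mem h.1).1 hpq
    have : a.val < b.val := hab
    omega
  · intro p q r s h1 h2 hcr
    obtain ⟨a, b, rfl, rfl, hab, h1'⟩ := (FNpair_mem h.1).1 h1
    obtain ⟨c, d, rfl, rfl, hcd, h2'⟩ := (FNpair_mem h.1).1 h2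
    exact h.2 _ h1' _ h2' ⟨a, b, c, d, rfl, rfl, hcr.1, hcr.2.1, hcr.2.2⟩

theorem FN_ncc (m k : ℕ) :
    ncc (m + 1) k = ((FNS 0 m).filter (fun E => E.card = k)).card := by
  classical
  unfold ncc
  rw [Nat.card_eq_fintype_card, Fintype.card_subtype]
  refine Finset.card_bij (fun E _ => E.image FNpair) ?_ ?_ ?_
  · intro E hE
    rw [Finset.mem_filter] at hE
    obtain ⟨_, ⟨hnc, hc⟩, hk⟩ := hE
    rw [Finset.mem_filter, mem_FNS, Finset.card_image_of_injective _ FNpair_inj]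
    exact ⟨⟨FN_valid_of hnc, (FN_conn_iff hnc.1).1 hc⟩, hk⟩
  · intro E _ F _ h
    exact Finset.image_injective FNpair_inj h
  · intro F hF
    rw [Finset.mem_filter, mem_FNS] at hF
    obtain ⟨⟨hv, hc⟩, hk⟩ := hF
    set E : Finset (Sym2 (Fin (m + 1))) := Finset.univ.filter (fun e => FNpair e ∈ F) with hE
    have hEF : E.image FNpair = F := by
      ext ⟨p, q⟩
      rw [Finset.mem_image]
      constructor
      · rintro ⟨e, he, h⟩
        rw [hE, Finset.mem_filter, h] at he
        exact he.2
      · intro h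
        have := hv.1 p q h
        have h3 : FNpair s((⟨p, by omega⟩ : Fin (m + 1)), (⟨q, by omega⟩ : Fin (m + 1))) = (p, q) :=
          FNpair_mk (by simp only [Fin.mk_le_mk]; omega)
        refine ⟨_, ?_, h3⟩
        rw [hE, Finset.mem_filter, h3]
        exact ⟨Finset.mem_univ _, h⟩
    have hmem : ∀ e ∈ E, FNpair e ∈ F := fun e he => (Finset.mem_filter.1 he).2
    have hd : ∀ e ∈ E, ¬ e.IsDiag := by
      intro e he hdiag
      obtain ⟨a, b, hab, rfl⟩ := FN_exists_sorted e
      have h1 := hmem _ he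
      rw [FNpair_mk hab] at h1
      have := hv.1 _ _ h1
      rw [Sym2.mk_isDiag_iff] at hdiag
      rw [hdiag] at this
      omega
    refine ⟨E, ?_, hEF⟩
    rw [Finset.mem_filter]
    refine ⟨Finset.mem_univ _, ⟨⟨hd, ?_⟩, ?_⟩, ?_⟩
    · rintro e he f hf ⟨a, b, c, d, rfl, rfl, h1, h2, h3⟩
      have g1 := hmem _ he
      have g2 := hmem _ hf
      rw [FNpair_mk (h1.trans h2).le] at g1
      rw [FNpair_mk (h2.trans h3).le] at g2
      exact hv.2 _ _ _ _ g1 g2 ⟨h1, h2, h3⟩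
    · rw [FN_conn_iff hd, hEF]
      exact hc
    · rw [← Finset.card_image_of_injective _ FNpair_inj, hEF, hk]

/-- Flajolet–Noy: the number of non-crossing connected graphs on `n` vertices with
`k` edges (`n-1 ≤ k ≤ 2n-3`) equals `(1/(n-1))·C(3n-3, n+k)·C(k-1, n-2)`,
stated multiplied through by `n-1`. -/
theorem stmt7 (n k : ℕ) (hnk : (n : ℤ) - 1 ≤ (k : ℤ))
    (hk : (k : ℤ) ≤ 2 * (n : ℤ) - 3) :
    (n - 1) * ncc n k = Nat.choose (3 * n - 3) (n + k) * Nat.choose (k - 1) (n - 2) := by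
  obtain ⟨m, rfl⟩ : ∃ m, n = m + 2 := ⟨n - 2, by omega⟩
  rw [FN_ncc (m + 1) k, show m + 2 - 1 = m + 1 by omega, show m + 2 - 2 = m by omega,
    show 3 * (m + 2) - 3 = 3 * (m + 1) by omega]
  exact FN_count m k (by omega) (by omega)
end

section
/- Let c_{n,k} = (1/(n-1))binom(3n-3,n+k)binom(k-1,n-2), d_{n,k} = (2/(n-2))binom(3n-5,n+k)binom(k-1,n-3), and let f_{n,k} be the number of non-crossing connected graphs on {1,...,n} with k edges that contain the edge {1,n}. Then for n ≥ 3 and n-1 ≤ k ≤ 2n-4, f_{n,k} + f_{n,k+1} = c_{n,k} + d_{n,k}. -/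
/-- Number of non-crossing graphs on `n` vertices with `k` edges having exactly two
connected components, with vertices `1` and `n` in different components. -/
noncomputable def nccTwoComp (n k : ℕ) : ℕ :=
  Nat.card {E : Finset (Sym2 (Fin n)) // IsNC E ∧ E.card = k ∧
    Nat.card (graphOf E).ConnectedComponent = 2 ∧
    ∀ a b : Fin n, (a : ℕ) = 0 → (b : ℕ) = n - 1 → ¬ (graphOf E).Reachable a b}

section Lagrange
set_option linter.unusedSectionVars false
open PowerSeries

variable {R : Type*} [CommRing R] [IsDomain R] [CharZero R]

lemma lag_coeff_subst (y : PowerSeries R) (hy0 : constantCoeff y = 0) (H : PowerSeries R) (n : ℕ) :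
    coeff n (H.subst y) = ∑ m ∈ Finset.range (n + 1), coeff m H * coeff n (y ^ m) := by
  have hs : HasSubst y := HasSubst.of_constantCoeff_zero' hy0
  rw [PowerSeries.coeff_subst' hs, finsum_eq_sum_of_support_subset]
  · rfl
  · intro m hm
    by_contra hmn
    apply hm
    have hlt : n < m := by
      simp only [Finset.coe_range, Set.mem_Iio] at hmn; omega
    have : (X : PowerSeries R) ^ m ∣ y ^ m := pow_dvd_pow_of_dvd (X_dvd_iff.mpr hy0) m
    have h0 := (X_pow_dvd_iff.mp this) n hlt
    simp [h0]

lemma lag_full_of_pow (φ y : PowerSeries R) (hy0 : constantCoeff y = 0) (n : ℕ) (hn : 1 ≤ n)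
    (hp : ∀ m, m ≤ n → (n : R) * coeff n (y ^ m) = (m : R) * coeff (n - m) (φ ^ n))
    (H : PowerSeries R) :
    (n : R) * coeff n (H.subst y) = coeff (n - 1) (derivative R H * φ ^ n) := by
  rw [lag_coeff_subst y hy0, Finset.mul_sum, coeff_mul,
    Finset.Nat.sum_antidiagonal_eq_sum_range_succ
      (fun i j => coeff i (derivative R H) * coeff j (φ ^ n)), Finset.sum_range_succ']
  have h0 : (n : R) * (coeff 0 H * coeff n (y ^ 0)) = 0 := by
    have := hp 0 (Nat.zero_le _)
    rw [mul_left_comm, this]; simp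
  rw [h0, add_zero]
  have : (n - 1).succ = n := by omega
  rw [this]
  apply Finset.sum_congr rfl
  intro m hm
  rw [Finset.mem_range] at hm
  rw [mul_left_comm, hp (m + 1) hm, coeff_derivative]
  have : n - (m + 1) = n - 1 - m := by omega
  rw [this]; push_cast; ring

lemma lag_pow (φ y : PowerSeries R) (hy : y = X * φ.subst y) (hy0 : constantCoeff y = 0) (n : ℕ) :
    ∀ m, m ≤ n → (n : R) * coeff n (y ^ m) = (m : R) * coeff (n - m) (φ ^ n) := by
  have hs : HasSubst y := HasSubst.of_constantCoeff_zero' hy0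
  induction n using Nat.strong_induction_on with
  | _ n ih =>
  intro m hm
  rcases Nat.eq_zero_or_pos m with rfl | hmpos
  · rcases Nat.eq_zero_or_pos n with rfl | hn
    · simp
    · simp [coeff_one, hn.ne']
  have hym : y ^ m = X ^ m * (φ ^ m).subst y := by
    conv_lhs => rw [hy]
    rw [mul_pow, subst_pow hs]
  have hc : coeff n (y ^ m) = coeff (n - m) ((φ ^ m).subst y) := by
    rw [hym, coeff_X_pow_mul']; simp [hm]
  rw [hc]
  rcases Nat.eq_or_lt_of_le hm with rfl | hlt
  · rw [lag_coeff_subst y hy0]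
    simp
  · have h1 := lag_full_of_pow φ y hy0 (n - m) (by omega) (ih (n - m) (by omega)) (φ ^ m)
    have hd : ∀ k : ℕ, 1 ≤ k → derivative R (φ ^ k) = (k : PowerSeries R) * φ ^ (k - 1) * derivative R φ := by
      intro k _
      simp [mul_assoc]
    have h2 : (n : PowerSeries R) * (derivative R (φ ^ m) * φ ^ (n - m)) = (m : PowerSeries R) * derivative R (φ ^ n) := by
      rw [hd m hmpos, hd n (by omega)]
      have : φ ^ (n - 1) = φ ^ (m - 1) * φ ^ (n - m) := by rw [← pow_add]; congr 1; omega
      rw [this]; ring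
    have h3 := congrArg (coeff (n - m - 1)) h2
    have hcast : ∀ (k j : ℕ) (f : PowerSeries R), coeff j ((k : PowerSeries R) * f) = (k : R) * coeff j f := by
      intro k j f
      rw [← nsmul_eq_mul, map_nsmul, nsmul_eq_mul]
    rw [hcast, hcast, coeff_derivative, ← h1] at h3
    have h4 : n - m - 1 + 1 = n - m := by omega
    have h5 : ((n - m - 1 : ℕ) : R) + 1 = ((n - m : ℕ) : R) := by exact_mod_cast h4
    rw [h4, h5] at h3
    have hne : ((n - m : ℕ) : R) ≠ 0 := by
      rw [Nat.cast_ne_zero]; omega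
    apply mul_left_cancel₀ hne
    linear_combination h3

lemma lagrange (φ y : PowerSeries R) (hy : y = X * φ.subst y) (n : ℕ) (hn : 1 ≤ n)
    (H : PowerSeries R) :
    (n : R) * coeff n (H.subst y) = coeff (n - 1) (derivative R H * φ ^ n) := by
  have hy0 : constantCoeff y = 0 := by rw [hy]; simp
  exact lag_full_of_pow φ y hy0 n hn (lag_pow φ y hy hy0 n) H

/-- geometric series in `w X` -/
noncomputable def geomS (w : R) : PowerSeries R := rescale w (mk 1)

lemma geomS_mul (w : R) : geomS w * (1 - C w * X) = 1 := by
  have h := congrArg (rescale w) (mk_one_mul_one_sub_eq_one R)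
  simpa [geomS, rescale_X] using h

lemma coeff_geomS_pow (w : R) (d j : ℕ) :
    coeff j (geomS w ^ (d + 1)) = w ^ j * (Nat.choose (d + j) d : R) := by
  rw [geomS, ← map_pow, mk_one_pow_eq_mk_choose_add, coeff_rescale, coeff_mk]

/-- the kernel -/
noncomputable def phiS (w : R) : PowerSeries R := C w * ((1 + X) ^ 3 * geomS w)

lemma y_eq (w : R) (y : PowerSeries R) (hy0 : constantCoeff y = 0)
    (h : y * (1 - C w * y) = C w * X * (1 + y) ^ 3) : y = X * (phiS w).subst y := by
  have hs : HasSubst y := HasSubst.of_constantCoeff_zero' hy0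
  have hC : ∀ r : R, (C r).subst y = C r := fun r => subst_C r
  have h1 : (1 : PowerSeries R).subst y = 1 := by
    have := hC 1; simpa using this
  have hg : (geomS w).subst y * (1 - C w * y) = 1 := by
    have := congrArg (fun f => f.subst y) (geomS_mul w)
    simpa [subst_mul hs, subst_sub hs, subst_X hs, hC, h1] using this
  have hphi : (phiS w).subst y = C w * ((1 + y) ^ 3 * (geomS w).subst y) := by
    rw [phiS, subst_mul hs, subst_mul hs, subst_pow hs, subst_add hs, subst_X hs, hC, h1]
  rw [hphi]
  linear_combination (geomS w).subst y * h - y * hg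

lemma coeff_one_add_X_pow' (M i : ℕ) : coeff i ((1 + X : PowerSeries R) ^ M) = (Nat.choose M i : R) := by
  have : ((1 + X : PowerSeries R) ^ M) = (((1 + Polynomial.X) ^ M : Polynomial R) : PowerSeries R) := by
    simp
  rw [this, Polynomial.coeff_coe, Polynomial.coeff_one_add_X_pow]

lemma cext (M d k : ℕ) (hk : d + 1 ≤ k) :
    Polynomial.coeff (coeff d (C ((Polynomial.X : Polynomial ℚ) ^ (d + 1)) *
      ((1 + X) ^ M * geomS (Polynomial.X : Polynomial ℚ) ^ (d + 1)))) k =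
    if k ≤ 2 * d + 1 then (Nat.choose M (2 * d + 1 - k) * Nat.choose (k - 1) d : ℚ) else 0 := by
  rw [coeff_C_mul, coeff_mul, Finset.Nat.sum_antidiagonal_eq_sum_range_succ
      (fun i j => coeff i _ * coeff j _)]
  simp only [coeff_one_add_X_pow', coeff_geomS_pow]
  obtain ⟨j, rfl⟩ := Nat.exists_eq_add_of_le hk
  rw [add_comm (d + 1) j, Polynomial.coeff_X_pow_mul, Polynomial.finsetSum_coeff]
  have key : ∀ i ∈ Finset.range d.succ, Polynomial.coeff ((Nat.choose M i : Polynomial ℚ) *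
      (Polynomial.X ^ (d - i) * (Nat.choose (d + (d - i)) d : Polynomial ℚ))) j =
      if i = d - j ∧ j ≤ d then (Nat.choose M i * Nat.choose (d + (d - i)) d : ℚ) else 0 := by
    intro i hi
    rw [Finset.mem_range] at hi
    rw [← Polynomial.C_eq_natCast, ← Polynomial.C_eq_natCast, Polynomial.coeff_C_mul,
      Polynomial.coeff_mul_C, Polynomial.coeff_X_pow]
    by_cases h : i = d - j ∧ j ≤ d
    · rw [if_pos h, if_pos (by omega)]; ring
    · rw [if_neg h, if_neg (by omega)]; ring
  rw [Finset.sum_congr rfl key]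
  by_cases hj : j ≤ d
  · rw [if_pos (by omega)]
    simp only [hj, and_true]
    rw [Finset.sum_ite_eq' , if_pos (by rw [Finset.mem_range]; omega)]
    have a1 : 2 * d + 1 - (j + (d + 1)) = d - j := by omega
    have a2 : j + (d + 1) - 1 = d + (d - (d - j)) := by omega
    rw [a1, a2]
  · rw [if_neg (by omega)]
    simp [hj]

lemma deriv_aux : derivative R (2 * X + X ^ 2 : PowerSeries R) = (1 + X) + (1 + X) := by
  have : (2 * X + X ^ 2 : PowerSeries R) = X + X + X * X := by ring
  rw [this, map_add, map_add, Derivation.leibniz, derivative_X]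
  simp only [smul_eq_mul]
  ring

/-- Final extraction of coefficients. -/
lemma extract (y : PowerSeries (Polynomial ℚ)) (hy0 : constantCoeff y = 0)
    (h : y * (1 - C Polynomial.X * y) = C Polynomial.X * X * (1 + y) ^ 3) :
    (∀ d k : ℕ, d + 1 ≤ k → ((d : ℚ) + 1) * (coeff (d + 1) y).coeff k =
      if k ≤ 2 * d + 1 then (Nat.choose (3 * (d + 1)) (2 * d + 1 - k) * Nat.choose (k - 1) d : ℚ)
        else 0) ∧
    (∀ d k : ℕ, d + 1 ≤ k → ((d : ℚ) + 1) * (coeff (d + 1) ((1 + y) ^ 2)).coeff k =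
      2 * if k ≤ 2 * d + 1 then
        (Nat.choose (3 * (d + 1) + 1) (2 * d + 1 - k) * Nat.choose (k - 1) d : ℚ) else 0) := by
  have hs : HasSubst y := HasSubst.of_constantCoeff_zero' hy0
  have hy := y_eq _ y hy0 h
  have hphi : ∀ N : ℕ, phiS (Polynomial.X : Polynomial ℚ) ^ N =
      C ((Polynomial.X : Polynomial ℚ) ^ N) * ((1 + X) ^ (3 * N) * geomS Polynomial.X ^ N) := by
    intro N
    rw [phiS, mul_pow, mul_pow, ← pow_mul, map_pow]
  have hcst : ∀ (d k : ℕ) (p : Polynomial ℚ), ((d : ℚ) + 1) * p.coeff k =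
      ((((d + 1 : ℕ) : Polynomial ℚ)) * p).coeff k := by
    intro d k p
    rw [← Polynomial.C_eq_natCast, Polynomial.coeff_C_mul]; push_cast; ring
  constructor
  · intro d k hk
    rw [← cext _ d k hk]
    have := lagrange _ y hy (d + 1) (by omega) X
    rw [subst_X hs] at this
    rw [hcst, this, hphi]
    simp [derivative_X]
  · intro d k hk
    rw [← cext _ d k hk]
    have := lagrange _ y hy (d + 1) (by omega) (2 * X + X ^ 2)
    have e : (2 * X + X ^ 2 : PowerSeries (Polynomial ℚ)).subst y = 2 * y + y ^ 2 := by
      have : (2 * X + X ^ 2 : PowerSeries (Polynomial ℚ)) = X + X + X ^ 2 := by ring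
      rw [this, subst_add hs, subst_add hs, subst_pow hs, subst_X hs]; ring
    rw [e] at this
    have e2 : (1 + y) ^ 2 = (2 * y + y ^ 2) + 1 := by ring
    have e3 := deriv_aux (R := Polynomial ℚ)
    rw [e2, map_add, coeff_one, if_neg (by omega), add_zero, hcst, this, e3, hphi]
    have e4 : ∀ A B : PowerSeries (Polynomial ℚ), (1 + X + (1 + X)) * (A * ((1 + X) ^ (3 * (d + 1)) * B)) =
        A * ((1 + X) ^ (3 * (d + 1) + 1) * B) + A * ((1 + X) ^ (3 * (d + 1) + 1) * B) := by
      intro A B; ring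
    rw [e4, map_add, Polynomial.coeff_add, Nat.add_sub_cancel, two_mul]
end Lagrange

section Comb
open Finset Classical

/-- possible edges on the interval -/
def Base (l r : ℕ) : Finset (ℕ × ℕ) := ((Icc l r) ×ˢ (Icc l r)).filter (fun e => e.1 < e.2)

lemma mem_Base {l r : ℕ} {e : ℕ × ℕ} : e ∈ Base l r ↔ l ≤ e.1 ∧ e.1 < e.2 ∧ e.2 ≤ r := by
  simp only [Base, mem_filter, mem_product, mem_Icc]; omega

/-- non crossing -/
def NCp (E : Finset (ℕ × ℕ)) : Prop :=
  ∀ e ∈ E, ∀ f ∈ E, ¬ (e.1 < f.1 ∧ f.1 < e.2 ∧ e.2 < f.2)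

/-- invariant predicates, i.e. unions of connected components -/
def Invp (E : Finset (ℕ × ℕ)) (p : ℕ → Prop) : Prop := ∀ e ∈ E, (p e.1 ↔ p e.2)

/-- connectedness on an interval -/
def Connp (E : Finset (ℕ × ℕ)) (l r : ℕ) : Prop :=
  ∀ p : ℕ → Prop, Invp E p → ∀ a, l ≤ a → a ≤ r → (p a ↔ p l)

/-- connected graphs -/
noncomputable def CS (l r : ℕ) : Finset (Finset (ℕ × ℕ)) :=
  (Base l r).powerset.filter (fun E => NCp E ∧ Connp E l r)

/-- connected graphs with the edge -/
noncomputable def FS (l r : ℕ) : Finset (Finset (ℕ × ℕ)) :=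
  (CS l r).filter (fun E => (l, r) ∈ E)

/-- two components -/
noncomputable def DS (l r : ℕ) : Finset (Finset (ℕ × ℕ)) :=
  (Base l r).powerset.filter (fun E => NCp E ∧ ¬ Connp E l r ∧ Connp (insert (l, r) E) l r)

/-- generating polynomial -/
noncomputable def gp (S : Finset (Finset (ℕ × ℕ))) : Polynomial ℚ :=
  ∑ E ∈ S, Polynomial.X ^ E.card

lemma mem_CS {l r : ℕ} {E : Finset (ℕ × ℕ)} : E ∈ CS l r ↔ E ⊆ Base l r ∧ NCp E ∧ Connp E l r := by
  simp [CS]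
lemma mem_FS {l r : ℕ} {E : Finset (ℕ × ℕ)} :
    E ∈ FS l r ↔ E ⊆ Base l r ∧ NCp E ∧ Connp E l r ∧ (l, r) ∈ E := by
  simp [FS, mem_CS, and_assoc]
lemma mem_DS {l r : ℕ} {E : Finset (ℕ × ℕ)} :
    E ∈ DS l r ↔ E ⊆ Base l r ∧ NCp E ∧ ¬ Connp E l r ∧ Connp (insert (l, r) E) l r := by
  simp [DS]

lemma Connp.mono {E E' : Finset (ℕ × ℕ)} {l r : ℕ} (h : Connp E l r) (hE : E ⊆ E') :
    Connp E' l r := fun p hp => h p (fun e he => hp e (hE he))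

lemma NCp.mono {E E' : Finset (ℕ × ℕ)} (h : NCp E') (hE : E ⊆ E') : NCp E :=
  fun e he f hf => h e (hE he) f (hE hf)

lemma CS_self (l : ℕ) : CS l l = {∅} := by
  ext E
  rw [mem_CS, mem_singleton]
  have hB : Base l l = ∅ := by
    ext e; rw [mem_Base]; simp; omega
  constructor
  · rintro ⟨h, -⟩
    rw [hB] at h; exact subset_empty.mp h
  · rintro rfl
    refine ⟨empty_subset _, fun e he => absurd he (notMem_empty _), ?_⟩
    intro p _ a h1 h2
    have : a = l := by omega
    rw [this]

lemma gp_CS_self (l : ℕ) : gp (CS l l) = 1 := by simp [gp, CS_self]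

lemma gp_F (l r : ℕ) (hlr : l < r) :
    (1 + Polynomial.X) * gp (FS l r) = Polynomial.X * (gp (CS l r) + gp (DS l r)) := by
  have h1 : gp (CS l r) = gp (FS l r) + gp ((CS l r).filter (fun E => ¬ (l, r) ∈ E)) := by
    rw [gp, gp, gp, FS, sum_filter_add_sum_filter_not]
  have hdis : Disjoint ((CS l r).filter (fun E => ¬ (l, r) ∈ E)) (DS l r) := by
    rw [Finset.disjoint_left]
    intro E h1 h2
    rw [mem_filter, mem_CS] at h1
    rw [mem_DS] at h2
    exact h2.2.2.1 h1.1.2.2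
  have h2 : gp (FS l r) = Polynomial.X * (gp ((CS l r).filter (fun E => ¬ (l, r) ∈ E)) + gp (DS l r)) := by
    rw [gp, gp, gp, ← sum_union hdis, mul_sum]
    have nodeg : ∀ E ∈ DS l r, (l, r) ∉ E := by
      intro E hE hm
      rw [mem_DS, insert_eq_of_mem hm] at hE
      exact hE.2.2.1 hE.2.2.2
    have hno : ∀ E ∈ (CS l r).filter (fun E => ¬ (l, r) ∈ E) ∪ DS l r, (l, r) ∉ E := by
      intro E hE
      rcases mem_union.mp hE with h | h
      · exact (mem_filter.mp h).2
      · exact nodeg E h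
    refine sum_nbij' (fun E => E.erase (l, r)) (fun E => insert (l, r) E) ?_ ?_ ?_ ?_ ?_
    · intro E hE
      rw [mem_FS] at hE
      obtain ⟨hB, hN, hC, hm⟩ := hE
      have hsub : E.erase (l, r) ⊆ E := erase_subset _ _
      rw [mem_union, mem_filter, mem_CS, mem_DS, insert_erase hm]
      by_cases hc : Connp (E.erase (l, r)) l r
      · left; exact ⟨⟨hsub.trans hB, hN.mono hsub, hc⟩, notMem_erase _ _⟩
      · right; exact ⟨hsub.trans hB, hN.mono hsub, hc, hC⟩
    · intro E hE
      have : E ⊆ Base l r ∧ NCp E ∧ Connp (insert (l, r) E) l r := by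
        rcases mem_union.mp hE with h | h
        · rw [mem_filter, mem_CS] at h
          exact ⟨h.1.1, h.1.2.1, h.1.2.2.mono (subset_insert _ _)⟩
        · rw [mem_DS] at h
          exact ⟨h.1, h.2.1, h.2.2.2⟩
      obtain ⟨hB, hN, hC⟩ := this
      rw [mem_FS]
      refine ⟨?_, ?_, hC, mem_insert_self _ _⟩
      · intro e he
        rcases mem_insert.mp he with rfl | he
        · rw [mem_Base]; simp; exact hlr
        · exact hB he
      · intro e he f hf
        rcases mem_insert.mp he with rfl | he
        · rcases mem_insert.mp hf with rfl | hf
          · simp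
          · have := mem_Base.mp (hB hf); simp only; omega
        · rcases mem_insert.mp hf with rfl | hf
          · have := mem_Base.mp (hB he); simp only; omega
          · exact hN e he f hf
    · intro E hE
      rw [mem_FS] at hE
      exact insert_erase hE.2.2.2
    · intro E hE
      exact erase_insert (hno E hE)
    · intro E hE
      rw [mem_FS] at hE
      rw [card_erase_of_mem hE.2.2.2, ← pow_succ']
      congr 1
      have := card_pos.mpr ⟨_, hE.2.2.2⟩
      omega
  rw [h1]
  linear_combination h2

lemma Connp_left {E1 E2 : Finset (ℕ × ℕ)} {l v r : ℕ} (hlv : l ≤ v) (hvr : v ≤ r)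
    (h1 : E1 ⊆ Base l v) (h2 : E2 ⊆ Base v r) (h : Connp (E1 ∪ E2) l r) : Connp E1 l v := by
  intro p hp a ha hav
  have := h (fun c => if c ≤ v then p c else p v) ?_ a ha (by omega)
  · simpa [hav, hlv] using this
  · intro e he
    rcases mem_union.mp he with he | he
    · have hb := mem_Base.mp (h1 he)
      have := hp e he
      simp only [show e.1 ≤ v by omega, show e.2 ≤ v by omega, if_true, this]
    · have hb := mem_Base.mp (h2 he)
      have a2 : ¬ e.2 ≤ v := by omega
      by_cases h : e.1 ≤ v
      · have : e.1 = v := by omega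
        simp [a2, this]
      · simp [a2, h]

lemma Connp_right {E1 E2 : Finset (ℕ × ℕ)} {l v r : ℕ} (hlv : l ≤ v) (hvr : v ≤ r)
    (h1 : E1 ⊆ Base l v) (h2 : E2 ⊆ Base v r) (h : Connp (E1 ∪ E2) l r) : Connp E2 v r := by
  intro p hp a ha hav
  have key : Invp (E1 ∪ E2) (fun c => if v ≤ c then p c else p v) := by
    intro e he
    rcases mem_union.mp he with he | he
    · have hb := mem_Base.mp (h1 he)
      have a2 : ¬ v ≤ e.1 := by omega
      by_cases h : v ≤ e.2
      · have : e.2 = v := by omega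
        simp [a2, this]
      · simp [a2, h]
    · have hb := mem_Base.mp (h2 he)
      have := hp e he
      simp only [show v ≤ e.1 by omega, show v ≤ e.2 by omega, if_true, this]
  have k1 := h _ key a (by omega) hav
  have k2 := h _ key v hlv hvr
  have := k1.trans k2.symm
  simpa [ha] using this

lemma gp_C (l r : ℕ) (hlr : l < r) :
    gp (CS l r) = ∑ v ∈ Ioc l r, gp (FS l v) * gp (CS v r) := by
  have hR : ∑ v ∈ Ioc l r, gp (FS l v) * gp (CS v r) =
      ∑ x ∈ (Ioc l r).sigma (fun v => FS l v ×ˢ CS v r),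
        (Polynomial.X : Polynomial ℚ) ^ (x.2.1.card + x.2.2.card) := by
    rw [sum_sigma]
    apply sum_congr rfl
    intro v _
    rw [gp, gp, sum_mul_sum, sum_product]
    simp only [pow_add]
  have hdis : ∀ v (E1 E2 : Finset (ℕ × ℕ)), E1 ⊆ Base l v → E2 ⊆ Base v r → Disjoint E1 E2 := by
    intro v E1 E2 h1 h2
    rw [Finset.disjoint_left]
    intro e he he'
    have := mem_Base.mp (h1 he)
    have := mem_Base.mp (h2 he')
    omega
  rw [hR, gp]
  symm
  refine sum_bij (fun x _ => x.2.1 ∪ x.2.2) ?_ ?_ ?_ ?_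
  · rintro ⟨v, E1, E2⟩ hx
    simp only [mem_sigma, mem_Ioc, mem_product, mem_FS, mem_CS] at hx
    obtain ⟨hv, ⟨b1, n1, c1, m1⟩, b2, n2, c2⟩ := hx
    simp only
    rw [mem_CS]
    refine ⟨?_, ?_, ?_⟩
    · intro e he
      rw [mem_Base]
      rcases mem_union.mp he with he | he
      · have := mem_Base.mp (b1 he); omega
      · have := mem_Base.mp (b2 he); omega
    · intro e he f hf
      rcases mem_union.mp he with he | he <;> rcases mem_union.mp hf with hf | hf
      · exact n1 e he f hf
      · have := mem_Base.mp (b1 he); have := mem_Base.mp (b2 hf); omega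
      · have := mem_Base.mp (b2 he); have := mem_Base.mp (b1 hf); omega
      · exact n2 e he f hf
    · intro p hp a ha har
      have hp1 : Invp E1 p := fun e he => hp e (mem_union_left _ he)
      have hp2 : Invp E2 p := fun e he => hp e (mem_union_right _ he)
      rcases le_total a v with h | h
      · exact c1 p hp1 a ha h
      · exact (c2 p hp2 a h har).trans (c1 p hp1 v (by omega) le_rfl)
  · rintro ⟨v, E1, E2⟩ hx ⟨v', E1', E2'⟩ hx' heq
    simp only [mem_sigma, mem_Ioc, mem_product, mem_FS, mem_CS] at hx hx' heq
    obtain ⟨hv, ⟨b1, n1, c1, m1⟩, b2, n2, c2⟩ := hx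
    obtain ⟨hv', ⟨b1', n1', c1', m1'⟩, b2', n2', c2'⟩ := hx'
    have hvv : v = v' := by
      have k1 : (l, v) ∈ E1' ∪ E2' := heq ▸ mem_union_left _ m1
      have k2 : (l, v') ∈ E1 ∪ E2 := heq ▸ mem_union_left _ m1'
      have j1 : v ≤ v' := by
        rcases mem_union.mp k1 with h | h
        · have := mem_Base.mp (b1' h); simp only at this; omega
        · have := mem_Base.mp (b2' h); simp only at this; omega
      have j2 : v' ≤ v := by
        rcases mem_union.mp k2 with h | h
        · have := mem_Base.mp (b1 h); simp only at this; omega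
        · have := mem_Base.mp (b2 h); simp only at this; omega
      omega
    subst hvv
    have e1 : E1 = E1' := by
      ext e
      have := Finset.ext_iff.mp heq e
      simp only [mem_union] at this
      constructor
      · intro h
        rcases this.mp (Or.inl h) with h' | h'
        · exact h'
        · have := mem_Base.mp (b1 h); have := mem_Base.mp (b2' h'); omega
      · intro h
        rcases this.mpr (Or.inl h) with h' | h'
        · exact h'
        · have := mem_Base.mp (b1' h); have := mem_Base.mp (b2 h'); omega
    have e2 : E2 = E2' := by
      ext e
      have := Finset.ext_iff.mp heq e
      simp only [mem_union] at this
      constructor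
      · intro h
        rcases this.mp (Or.inr h) with h' | h'
        · have := mem_Base.mp (b2 h); have := mem_Base.mp (b1' h'); omega
        · exact h'
      · intro h
        rcases this.mpr (Or.inr h) with h' | h'
        · have := mem_Base.mp (b2' h); have := mem_Base.mp (b1 h'); omega
        · exact h'
    rw [e1, e2]
  · intro E hE
    rw [mem_CS] at hE
    obtain ⟨hB, hN, hC⟩ := hE
    have hne : (E.filter (fun e => e.1 = l)).Nonempty := by
      by_contra hne
      rw [not_nonempty_iff_eq_empty, filter_eq_empty_iff] at hne
      have := hC (fun c => c = l) ?_ r hlr.le le_rfl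
      · simp at this; omega
      · intro e he
        have := hne he
        have := mem_Base.mp (hB he)
        constructor <;> intro h <;> simp only at h <;> omega
    obtain ⟨⟨l', v⟩, hm, hmax⟩ := exists_max_image _ (fun e : ℕ × ℕ => e.2) hne
    rw [mem_filter] at hm
    obtain ⟨hmem, hl'⟩ := hm
    simp only at hl'
    subst hl'
    have hv := mem_Base.mp (hB hmem)
    simp only at hv
    have hmax' : ∀ e ∈ E, e.1 = l' → e.2 ≤ v := fun e he h => hmax e (mem_filter.mpr ⟨he, h⟩)
    have hU : E.filter (fun e => e.2 ≤ v) ∪ E.filter (fun e => v ≤ e.1) = E := by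
      ext e
      rw [mem_union, mem_filter, mem_filter]
      constructor
      · rintro (h | h) <;> exact h.1
      · intro he
        have hb := mem_Base.mp (hB he)
        have h1 := hN _ hmem e he
        have h2 := hmax' e he
        simp only at h1
        rcases Nat.lt_or_ge v e.2 with h | h
        · right; refine ⟨he, ?_⟩
          by_contra hlt
          by_cases h3 : e.1 = l'
          · have := h2 h3; omega
          · apply h1; omega
        · left; exact ⟨he, h⟩
    have b1 : E.filter (fun e => e.2 ≤ v) ⊆ Base l' v := by
      intro e he
      rw [mem_filter] at he
      have hb := mem_Base.mp (hB he.1)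
      rw [mem_Base]; omega
    have b2 : E.filter (fun e => v ≤ e.1) ⊆ Base v r := by
      intro e he
      rw [mem_filter] at he
      have hb := mem_Base.mp (hB he.1)
      rw [mem_Base]; omega
    refine ⟨⟨v, E.filter (fun e => e.2 ≤ v), E.filter (fun e => v ≤ e.1)⟩, ?_, hU⟩
    simp only [mem_sigma, mem_Ioc, mem_product]
    rw [mem_FS, mem_CS]
    refine ⟨by omega, ⟨b1, hN.mono (filter_subset _ _), ?_, ?_⟩, b2, hN.mono (filter_subset _ _), ?_⟩
    · exact Connp_left (by omega) (by omega) b1 b2 (hU.symm ▸ hC)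
    · rw [mem_filter]; exact ⟨hmem, le_rfl⟩
    · exact Connp_right (by omega) (by omega) b1 b2 (hU.symm ▸ hC)
  · rintro ⟨v, E1, E2⟩ hx
    simp only [mem_sigma, mem_Ioc, mem_product, mem_FS, mem_CS] at hx
    simp only
    rw [card_union_of_disjoint (hdis v E1 E2 hx.2.1.1 hx.2.2.1)]

/-- structure of two component graphs -/
lemma DS_struct {l r : ℕ} {E : Finset (ℕ × ℕ)} (hlr : l < r) (hE : E ∈ DS l r) :
    ∃ i, l ≤ i ∧ i < r ∧ ∀ e ∈ E, (e.1 ≤ i ↔ e.2 ≤ i) := by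
  rw [mem_DS] at hE
  obtain ⟨hB, hN, hnC, hC⟩ := hE
  -- key: invariants with equal values at l and r are constant
  have key : ∀ q : ℕ → Prop, Invp E q → (q l ↔ q r) → ∀ a, l ≤ a → a ≤ r → (q a ↔ q l) := by
    intro q hq hlr'
    apply hC
    intro e he
    rcases mem_insert.mp he with rfl | he
    · exact hlr'
    · exact hq e he
  have hp : ∃ p : ℕ → Prop, Invp E p ∧ p l ∧ ¬ p r := by
    unfold Connp at hnC
    push Not at hnC
    obtain ⟨p, hp, a, ha1, ha2, hne⟩ := hnC
    have hpr : ¬ (p l ↔ p r) := by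
      intro h
      have := key p hp h a ha1 ha2
      tauto
    by_cases h : p l
    · exact ⟨p, hp, h, by tauto⟩
    · refine ⟨fun c => ¬ p c, fun e he => not_congr (hp e he), h, by tauto⟩
  obtain ⟨p, hp, hpl, hpr⟩ := hp
  have uniq : ∀ q : ℕ → Prop, Invp E q → q l → ¬ q r → ∀ a, l ≤ a → a ≤ r → (q a ↔ p a) := by
    intro q hq hql hqr a ha1 ha2
    have := key (fun c => (q c ↔ p c)) ?_ ?_ a ha1 ha2
    · simp only [hql, hpl, iff_true] at this; exact this
    · intro e he
      have := hq e he
      have := hp e he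
      simp only; tauto
    · tauto
  have mono : ∀ a b, l ≤ a → a < b → b ≤ r → p b → p a := by
    intro a b hla hab hbr hpb
    by_contra hpa
    have hla' : l < a := by
      rcases Nat.eq_or_lt_of_le hla with h | h
      · subst h; exact absurd hpl hpa
      · exact h
    have hx : ∃ e ∈ E, e.1 < a ∧ a < e.2 ∧ p e.1 ∧ p e.2 := by
      by_contra hno
      push Not at hno
      have := uniq (fun c => p c ∧ c < a) ?_ ⟨hpl, hla'⟩ (fun h => hpr h.1) b (by omega) hbr
      · have := this.mpr hpb; omega
      · intro e he
        have hb := mem_Base.mp (hB he)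
        have h1 := hp e he
        have h2 := hno e he
        constructor
        · rintro ⟨h3, h4⟩
          refine ⟨h1.mp h3, ?_⟩
          by_contra h5
          rcases Nat.eq_or_lt_of_le (not_lt.mp h5) with h6 | h6
          · rw [h6] at hpa; exact hpa (h1.mp h3)
          · exact h2 h4 h6 h3 (h1.mp h3)
        · rintro ⟨h3, h4⟩
          exact ⟨h1.mpr h3, by omega⟩
    obtain ⟨⟨x, y⟩, hxy, hxa, hay, hpx, hpy⟩ := hx
    simp only at hxa hay hpx hpy
    have hbxy := mem_Base.mp (hB hxy)
    simp only at hbxy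
    have hyr : y ≠ r := by rintro rfl; exact hpr hpy
    have := uniq (fun c => p c ∨ (x < c ∧ c < y)) ?_ (Or.inl hpl) ?_ a (by omega) (by omega)
    · exact hpa (this.mp (Or.inr ⟨hxa, hay⟩))
    · rintro ⟨u, v⟩ he
      have hb := mem_Base.mp (hB he)
      have h1 := hp _ he
      have n1 := hN _ hxy _ he
      have n2 := hN _ he _ hxy
      simp only at hb h1 n1 n2 ⊢
      by_cases hpu : p u
      · have hpv := h1.mp hpu
        simp [hpu, hpv]
      · have hpv : ¬ p v := fun h => hpu (h1.mpr h)
        have ux : u ≠ x := by rintro rfl; exact hpu hpx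
        have uy : u ≠ y := by rintro rfl; exact hpu hpy
        have vx : v ≠ x := by rintro rfl; exact hpv hpx
        have vy : v ≠ y := by rintro rfl; exact hpv hpy
        simp only [hpu, hpv, false_or]
        omega
    · rintro (h | h)
      · exact hpr h
      · omega
  -- the largest true position
  obtain ⟨i, hi, hmax⟩ := exists_max_image ((Icc l r).filter p) id ⟨l, by simp [hpl, hlr.le]⟩
  rw [mem_filter, mem_Icc] at hi
  have hir : i < r := by
    rcases Nat.eq_or_lt_of_le hi.1.2 with h | h
    · rw [h] at hi; exact absurd hi.2 hpr
    · exact h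
  have pi : ∀ c, l ≤ c → c ≤ r → (p c ↔ c ≤ i) := by
    intro c h1 h2
    constructor
    · intro h; exact hmax c (mem_filter.mpr ⟨mem_Icc.mpr ⟨h1, h2⟩, h⟩)
    · intro h
      rcases Nat.eq_or_lt_of_le h with h | h
      · rw [h]; exact hi.2
      · exact mono c i h1 h hi.1.2 hi.2
  refine ⟨i, hi.1.1, hir, ?_⟩
  intro e he
  have hb := mem_Base.mp (hB he)
  rw [← pi e.1 (by omega) (by omega), ← pi e.2 (by omega) (by omega)]
  exact hp e he

lemma gp_D (l r : ℕ) (hlr : l < r) :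
    gp (DS l r) = ∑ i ∈ Ico l r, gp (CS l i) * gp (CS (i + 1) r) := by
  have hR : ∑ i ∈ Ico l r, gp (CS l i) * gp (CS (i + 1) r) =
      ∑ x ∈ (Ico l r).sigma (fun v => CS l v ×ˢ CS (v + 1) r),
        (Polynomial.X : Polynomial ℚ) ^ (x.2.1.card + x.2.2.card) := by
    rw [sum_sigma]
    apply sum_congr rfl
    intro v _
    rw [gp, gp, sum_mul_sum, sum_product]
    simp only [pow_add]
  have hdis : ∀ v (E1 E2 : Finset (ℕ × ℕ)), E1 ⊆ Base l v → E2 ⊆ Base (v + 1) r → Disjoint E1 E2 := by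
    intro v E1 E2 h1 h2
    rw [Finset.disjoint_left]
    intro e he he'
    have := mem_Base.mp (h1 he)
    have := mem_Base.mp (h2 he')
    omega
  have hsep : ∀ i (E1 E2 : Finset (ℕ × ℕ)), E1 ⊆ Base l i → E2 ⊆ Base (i + 1) r →
      Invp (E1 ∪ E2) (fun c => c ≤ i) := by
    intro i E1 E2 b1 b2 e he
    simp only
    rcases mem_union.mp he with he | he
    · have := mem_Base.mp (b1 he); omega
    · have := mem_Base.mp (b2 he); omega
  rw [hR, gp]
  symm
  refine sum_bij (fun x _ => x.2.1 ∪ x.2.2) ?_ ?_ ?_ ?_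
  · rintro ⟨i, E1, E2⟩ hx
    simp only [mem_sigma, mem_Ico, mem_product, mem_CS] at hx
    obtain ⟨hv, ⟨b1, n1, c1⟩, b2, n2, c2⟩ := hx
    simp only
    rw [mem_DS]
    refine ⟨?_, ?_, ?_, ?_⟩
    · intro e he
      rw [mem_Base]
      rcases mem_union.mp he with he | he
      · have := mem_Base.mp (b1 he); omega
      · have := mem_Base.mp (b2 he); omega
    · intro e he f hf
      rcases mem_union.mp he with he | he <;> rcases mem_union.mp hf with hf | hf
      · exact n1 e he f hf
      · have := mem_Base.mp (b1 he); have := mem_Base.mp (b2 hf); omega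
      · have := mem_Base.mp (b2 he); have := mem_Base.mp (b1 hf); omega
      · exact n2 e he f hf
    · intro hc
      have := hc _ (hsep i E1 E2 b1 b2) r hlr.le le_rfl
      omega
    · intro p hp a ha har
      have hp0 := hp (l, r) (mem_insert_self _ _)
      have hp1 : Invp E1 p := fun e he => hp e (mem_insert_of_mem (mem_union_left _ he))
      have hp2 : Invp E2 p := fun e he => hp e (mem_insert_of_mem (mem_union_right _ he))
      rcases Nat.lt_or_ge i a with h | h
      · have k1 := c2 p hp2 a h har
        have k2 := c2 p hp2 r (by omega) le_rfl
        simp only at hp0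
        rw [k1, ← k2, hp0]
      · exact c1 p hp1 a ha h
  · rintro ⟨i, E1, E2⟩ hx ⟨i', E1', E2'⟩ hx' heq
    simp only [mem_sigma, mem_Ico, mem_product, mem_CS] at hx hx' heq
    obtain ⟨hv, ⟨b1, n1, c1⟩, b2, n2, c2⟩ := hx
    obtain ⟨hv', ⟨b1', n1', c1'⟩, b2', n2', c2'⟩ := hx'
    have hvv : i = i' := by
      have s1 := hsep i E1 E2 b1 b2
      have s2 := hsep i' E1' E2' b1' b2'
      rw [heq] at s1
      rw [← heq] at s2
      have k1 := c1' (fun c => c ≤ i) (fun e he => s1 e (mem_union_left _ he)) i' (by omega) le_rfl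
      have k2 := c1 (fun c => c ≤ i') (fun e he => s2 e (mem_union_left _ he)) i (by omega) le_rfl
      omega
    subst hvv
    have e1 : E1 = E1' := by
      ext e
      have := Finset.ext_iff.mp heq e
      simp only [mem_union] at this
      constructor
      · intro h
        rcases this.mp (Or.inl h) with h' | h'
        · exact h'
        · have := mem_Base.mp (b1 h); have := mem_Base.mp (b2' h'); omega
      · intro h
        rcases this.mpr (Or.inl h) with h' | h'
        · exact h'
        · have := mem_Base.mp (b1' h); have := mem_Base.mp (b2 h'); omega
    have e2 : E2 = E2' := by
      ext e
      have := Finset.ext_iff.mp heq e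
      simp only [mem_union] at this
      constructor
      · intro h
        rcases this.mp (Or.inr h) with h' | h'
        · have := mem_Base.mp (b2 h); have := mem_Base.mp (b1' h'); omega
        · exact h'
      · intro h
        rcases this.mpr (Or.inr h) with h' | h'
        · have := mem_Base.mp (b2' h); have := mem_Base.mp (b1 h'); omega
        · exact h'
    rw [e1, e2]
  · intro E hE
    obtain ⟨i, hli, hir, hs⟩ := DS_struct hlr hE
    rw [mem_DS] at hE
    obtain ⟨hB, hN, hnC, hC⟩ := hE
    have hU : E.filter (fun e => e.2 ≤ i) ∪ E.filter (fun e => i + 1 ≤ e.1) = E := by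
      ext e
      rw [mem_union, mem_filter, mem_filter]
      constructor
      · rintro (h | h) <;> exact h.1
      · intro he
        have := hs e he
        rcases Nat.lt_or_ge i e.2 with h | h
        · right; exact ⟨he, by omega⟩
        · left; exact ⟨he, h⟩
    have b1 : E.filter (fun e => e.2 ≤ i) ⊆ Base l i := by
      intro e he
      rw [mem_filter] at he
      have hb := mem_Base.mp (hB he.1)
      rw [mem_Base]; omega
    have b2 : E.filter (fun e => i + 1 ≤ e.1) ⊆ Base (i + 1) r := by
      intro e he
      rw [mem_filter] at he
      have hb := mem_Base.mp (hB he.1)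
      rw [mem_Base]; omega
    refine ⟨⟨i, E.filter (fun e => e.2 ≤ i), E.filter (fun e => i + 1 ≤ e.1)⟩, ?_, hU⟩
    simp only [mem_sigma, mem_Ico, mem_product]
    rw [mem_CS, mem_CS]
    refine ⟨by omega, ⟨b1, hN.mono (filter_subset _ _), ?_⟩, b2, hN.mono (filter_subset _ _), ?_⟩
    · intro p hp a ha hai
      have := hC (fun c => if c ≤ i then p c else p l) ?_ a ha (by omega)
      · simpa [hai, hli] using this
      · intro e he
        rcases mem_insert.mp he with rfl | he
        · simp [hli, hir]
        · have h1 := hs e he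
          by_cases h : e.2 ≤ i
          · have := hp e (mem_filter.mpr ⟨he, h⟩)
            simp only [h1.mpr h, h, if_true, this]
          · have : ¬ e.1 ≤ i := fun h' => h (h1.mp h')
            simp [h, this]
    · intro p hp a ha har
      have kinv : Invp (insert (l, r) E) (fun c => if c ≤ i then p r else p c) := by
        intro e he
        rcases mem_insert.mp he with rfl | he
        · simp [hli, hir]
        · have h1 := hs e he
          by_cases h : e.2 ≤ i
          · simp [h, h1.mpr h]
          · have h2 : ¬ e.1 ≤ i := fun h' => h (h1.mp h')
            have := hp e (mem_filter.mpr ⟨he, by omega⟩)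
            simp only [h, h2, if_false, this]
      have k1 := hC _ kinv a (by omega) har
      have k2 := hC _ kinv (i + 1) (by omega) (by omega)
      have := k1.trans k2.symm
      simpa [show ¬ a ≤ i by omega] using this
  · rintro ⟨v, E1, E2⟩ hx
    simp only [mem_sigma, mem_Ico, mem_product, mem_CS] at hx
    simp only
    rw [card_union_of_disjoint (hdis v E1 E2 hx.2.1.1 hx.2.2.1)]

end Comb

section Gen
open Finset Classical

lemma gp_C' (l m : ℕ) : gp (CS l (l + (m + 1))) =
    ∑ j ∈ range (m + 1), gp (FS l (l + (j + 1))) * gp (CS (l + (j + 1)) (l + (j + 1) + (m - j))) := by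
  rw [gp_C l _ (by omega)]
  have : Ioc l (l + (m + 1)) = Ico (l + 1) (l + 1 + (m + 1)) := by
    ext x; simp only [mem_Ioc, mem_Ico]; omega
  rw [this, sum_Ico_eq_sum_range, Nat.add_sub_cancel_left]
  apply sum_congr rfl
  intro j hj
  rw [mem_range] at hj
  have e1 : l + 1 + j = l + (j + 1) := by omega
  have e2 : l + (m + 1) = l + (j + 1) + (m - j) := by omega
  rw [e1, e2]

lemma gp_D' (l m : ℕ) : gp (DS l (l + (m + 1))) =
    ∑ j ∈ range (m + 1), gp (CS l (l + j)) * gp (CS (l + j + 1) (l + j + 1 + (m - j))) := by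
  rw [gp_D l _ (by omega), sum_Ico_eq_sum_range, Nat.add_sub_cancel_left]
  apply sum_congr rfl
  intro j hj
  rw [mem_range] at hj
  have e2 : l + (m + 1) = l + j + 1 + (m - j) := by omega
  rw [e2]

lemma gp_F' (l m : ℕ) : gp (FS l (l + (m + 1))) = Polynomial.X *
    (∑ j ∈ range m, gp (FS l (l + (j + 1))) * gp (CS (l + (j + 1)) (l + (j + 1) + (m - j))) +
      gp (DS l (l + (m + 1)))) := by
  have h := gp_F l (l + (m + 1)) (by omega)
  rw [gp_C', sum_range_succ, Nat.sub_self, add_zero, gp_CS_self] at h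
  linear_combination h

lemma gp_shift (m : ℕ) : (∀ l, gp (CS l (l + m)) = gp (CS 0 (0 + m))) ∧
    (∀ l, 1 ≤ m → gp (FS l (l + m)) = gp (FS 0 (0 + m))) := by
  induction m using Nat.strong_induction_on with
  | _ m ih =>
  cases m with
  | zero => exact ⟨fun l => by simp [gp_CS_self], fun l h => absurd h (by omega)⟩
  | succ m =>
    have hc : ∀ j, j ≤ m → ∀ l l', gp (CS l (l + j)) = gp (CS l' (l' + j)) := by
      intro j hj l l'
      rw [(ih j (by omega)).1 l, (ih j (by omega)).1 l']
    have hF : ∀ l, gp (FS l (l + (m + 1))) = gp (FS 0 (0 + (m + 1))) := by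
      intro l
      rw [gp_F', gp_F' 0, gp_D', gp_D']
      refine congrArg (fun t => Polynomial.X * t) (congrArg₂ (fun s t => s + t) ?_ ?_)
      · apply sum_congr rfl
        intro j hj
        rw [mem_range] at hj
        rw [(ih (j + 1) (by omega)).2 l (by omega)]
        rw [hc (m - j) (by omega) _ (0 + (j + 1))]
      · apply sum_congr rfl
        intro j hj
        rw [mem_range] at hj
        rw [hc j (by omega) l 0, hc (m - j) (by omega) _ (0 + j + 1)]
    refine ⟨?_, fun l _ => hF l⟩
    intro l
    rw [gp_C', gp_C']
    apply sum_congr rfl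
    intro j hj
    rw [mem_range] at hj
    refine congrArg₂ (fun s t => s * t) ?_ ?_
    · rcases Nat.lt_or_ge j m with h | h
      · exact (ih (j + 1) (by omega)).2 l (by omega)
      · have : j = m := by omega
        rw [this]; exact hF l
    · exact hc _ (by omega) _ _

/-- generating function of connected graphs -/
noncomputable def Cser : PowerSeries (Polynomial ℚ) := PowerSeries.mk (fun m => gp (CS 0 m))
/-- generating function of connected graphs with the root edge -/
noncomputable def Fser : PowerSeries (Polynomial ℚ) := PowerSeries.mk (fun m => gp (FS 0 (m + 1)))

lemma gp_shift_C (l m : ℕ) : gp (CS l (l + m)) = gp (CS 0 m) := by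
  rw [(gp_shift m).1 l, zero_add]

lemma coeff_D (m : ℕ) : gp (DS 0 (m + 1)) = PowerSeries.coeff m (Cser ^ 2) := by
  have := gp_D' 0 m
  rw [zero_add] at this
  rw [this, sq, PowerSeries.coeff_mul, Finset.Nat.sum_antidiagonal_eq_sum_range_succ
      (fun i j => PowerSeries.coeff i Cser * PowerSeries.coeff j Cser)]
  apply sum_congr rfl
  intro j _
  rw [gp_shift_C, gp_shift_C, Cser, PowerSeries.coeff_mk, PowerSeries.coeff_mk]

lemma Cser_eq : Cser = 1 + PowerSeries.X * (Fser * Cser) := by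
  ext1 m
  cases m with
  | zero => simp [Cser, gp_CS_self]
  | succ m =>
    rw [map_add, PowerSeries.coeff_succ_X_mul, PowerSeries.coeff_one, if_neg (by omega), zero_add,
      PowerSeries.coeff_mul, Finset.Nat.sum_antidiagonal_eq_sum_range_succ
      (fun i j => PowerSeries.coeff i Fser * PowerSeries.coeff j Cser)]
    have := gp_C' 0 m
    rw [zero_add] at this
    rw [Cser, PowerSeries.coeff_mk, this]
    apply sum_congr rfl
    intro j _
    rw [gp_shift_C, Fser, PowerSeries.coeff_mk, PowerSeries.coeff_mk, zero_add]

lemma Fser_eq : (1 + PowerSeries.C Polynomial.X) * (PowerSeries.X * Fser) =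
    PowerSeries.C Polynomial.X * (Cser - 1 + PowerSeries.X * Cser ^ 2) := by
  ext1 m
  have : (1 + PowerSeries.C (Polynomial.X : Polynomial ℚ)) = PowerSeries.C (1 + Polynomial.X) := by
    simp
  rw [this, PowerSeries.coeff_C_mul, PowerSeries.coeff_C_mul, map_add, map_sub]
  cases m with
  | zero => simp [Cser, gp_CS_self]
  | succ m =>
    rw [PowerSeries.coeff_succ_X_mul, PowerSeries.coeff_succ_X_mul, ← coeff_D, PowerSeries.coeff_one,
      if_neg (by omega), sub_zero, Fser, Cser, PowerSeries.coeff_mk, PowerSeries.coeff_mk]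
    exact gp_F 0 (m + 1) (by omega)

lemma main_eq : (Cser - 1) * (1 - PowerSeries.C Polynomial.X * (Cser - 1)) =
    PowerSeries.C Polynomial.X * PowerSeries.X * (1 + (Cser - 1)) ^ 3 := by
  have h1 := Cser_eq
  have h2 := Fser_eq
  linear_combination (1 + PowerSeries.C (Polynomial.X : Polynomial ℚ)) * h1 + Cser * h2

lemma Cser_const : PowerSeries.constantCoeff (Cser - 1) = 0 := by
  rw [map_sub, ← PowerSeries.coeff_zero_eq_constantCoeff_apply, Cser, PowerSeries.coeff_mk, gp_CS_self]
  simp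

lemma gp_coeff (S : Finset (Finset (ℕ × ℕ))) (k : ℕ) :
    (gp S).coeff k = ((S.filter (fun E => E.card = k)).card : ℚ) := by
  rw [gp, Polynomial.finsetSum_coeff]
  simp only [Polynomial.coeff_X_pow]
  rw [sum_boole]
  congr 2
  ext E; simp only [mem_filter]; constructor <;> rintro ⟨a, b⟩ <;> exact ⟨a, b.symm⟩

/-- Counting formula for the sets of pairs. -/
lemma count_pairs (n k : ℕ) (hn : 3 ≤ n) (hnk : n - 1 ≤ k) (hk : k ≤ 2 * n - 4) :
    ((n : ℚ) - 1) * ((n : ℚ) - 2) * ((gp (FS 0 (n - 1))).coeff k + (gp (FS 0 (n - 1))).coeff (k + 1)) =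
      ((n : ℚ) - 2) * ((Nat.choose (3 * n - 3) (n + k) : ℚ) * Nat.choose (k - 1) (n - 2)) +
        ((n : ℚ) - 1) * (2 * ((Nat.choose (3 * n - 5) (n + k) : ℚ) * Nat.choose (k - 1) (n - 3))) := by
  obtain ⟨d, rfl⟩ := Nat.exists_eq_add_of_le' hn
  obtain ⟨hc, hd⟩ := extract (Cser - 1) Cser_const main_eq
  have hc' := hc (d + 1) k (by omega)
  have hd' := hd d k (by omega)
  have e1 : (1 + (Cser - 1)) = Cser := by ring
  rw [e1, ← coeff_D] at hd'
  rw [map_sub, PowerSeries.coeff_one, if_neg (by omega), sub_zero, Cser, PowerSeries.coeff_mk,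
    if_pos (by omega)] at hc'
  have hF := congrArg (fun p => Polynomial.coeff p (k + 1)) (gp_F 0 (d + 1 + 1) (by omega))
  simp only [add_mul, one_mul, Polynomial.coeff_add, Polynomial.coeff_X_mul] at hF
  have e2 : d + 3 - 1 = d + 1 + 1 := by omega
  have e3 : d + 3 - 2 = d + 1 := by omega
  have e4 : d + 3 - 3 = d := by omega
  have s1 : Nat.choose (3 * (d + 3) - 3) (d + 3 + k) = Nat.choose (3 * (d + 1 + 1)) (2 * (d + 1) + 1 - k) := by
    have : 3 * (d + 3) - 3 = 3 * (d + 1 + 1) := by omega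
    rw [this]
    apply Nat.choose_symm_of_eq_add
    omega
  have s2 : (if k ≤ 2 * d + 1 then
        (Nat.choose (3 * (d + 1) + 1) (2 * d + 1 - k) * Nat.choose (k - 1) d : ℚ) else 0) =
      (Nat.choose (3 * (d + 3) - 5) (d + 3 + k) : ℚ) * Nat.choose (k - 1) d := by
    have : 3 * (d + 3) - 5 = 3 * (d + 1) + 1 := by omega
    rw [this]
    split_ifs with h
    · rw [Nat.choose_symm_of_eq_add (show 3 * (d + 1) + 1 = (2 * d + 1 - k) + (d + 3 + k) by omega)]
    · rw [Nat.choose_eq_zero_of_lt (show 3 * (d + 1) + 1 < d + 3 + k by omega)]; simp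
  rw [s2] at hd'
  rw [e2, e3, e4, s1]
  push_cast at hc' hd' ⊢
  linear_combination ((d : ℚ) + 1) * (d + 2) * hF + ((d : ℚ) + 1) * hc' + ((d : ℚ) + 2) * hd'

end Gen

section Transfer
open Finset Classical

/-- encoding of pairs as unordered pairs -/
def gmap (m : ℕ) (e : ℕ × ℕ) : Sym2 (Fin (m + 1)) := s(Fin.ofNat (m + 1) e.1, Fin.ofNat (m + 1) e.2)

lemma ofNat_val {m a : ℕ} (h : a ≤ m) : (Fin.ofNat (m + 1) a).val = a := by
  simp [Fin.ofNat]; omega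

lemma gmap_eq {m : ℕ} {e : ℕ × ℕ} (he : e ∈ Base 0 m) {a b : Fin (m + 1)} (hab : a < b) :
    gmap m e = s(a, b) ↔ e = (a.1, b.1) := by
  rw [mem_Base] at he
  have v1 := ofNat_val (m := m) (a := e.1) (by omega)
  have v2 := ofNat_val (m := m) (a := e.2) (by omega)
  have hab' : a.1 < b.1 := hab
  rw [gmap, Sym2.eq_iff, Prod.ext_iff]
  simp only [Fin.ext_iff, v1, v2]
  omega

lemma mem_image_g {m : ℕ} {E : Finset (ℕ × ℕ)} (hE : E ⊆ Base 0 m) {a b : Fin (m + 1)} (hab : a < b) :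
    s(a, b) ∈ E.image (gmap m) ↔ (a.1, b.1) ∈ E := by
  rw [mem_image]
  constructor
  · rintro ⟨e, he, h⟩
    rw [gmap_eq (hE he) hab] at h
    rwa [← h]
  · intro h
    exact ⟨_, h, (gmap_eq (hE h) hab).mpr rfl⟩

lemma gmap_inj (m : ℕ) : Set.InjOn (gmap m) (Base 0 m : Set (ℕ × ℕ)) := by
  intro e he f hf h
  have he' := mem_Base.mp he
  have hf' := mem_Base.mp hf
  have v1 := ofNat_val (m := m) (a := f.1) (by omega)
  have v2 := ofNat_val (m := m) (a := f.2) (by omega)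
  have : gmap m e = s(Fin.ofNat (m + 1) f.1, Fin.ofNat (m + 1) f.2) := h
  rw [gmap_eq he (by rw [Fin.lt_def, v1, v2]; omega)] at this
  rw [this, v1, v2]

lemma IsNC_image {m : ℕ} {E : Finset (ℕ × ℕ)} (hE : E ⊆ Base 0 m) :
    IsNC (E.image (gmap m)) ↔ NCp E := by
  constructor
  · rintro ⟨-, h⟩ e he f hf hcr
    have he' := mem_Base.mp (hE he)
    have hf' := mem_Base.mp (hE hf)
    refine h _ (mem_image_of_mem _ he) _ (mem_image_of_mem _ hf) ⟨_, _, _, _, rfl, rfl, ?_, ?_, ?_⟩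
    all_goals
      rw [Fin.lt_def, ofNat_val (by omega), ofNat_val (by omega)]
      omega
  · intro h
    constructor
    · intro e he
      obtain ⟨f, hf, rfl⟩ := mem_image.mp he
      have hf' := mem_Base.mp (hE hf)
      rw [gmap, Sym2.mk_isDiag_iff, Fin.ext_iff, ofNat_val (by omega), ofNat_val (by omega)]
      omega
    · rintro e he f hf ⟨a, b, c, d, rfl, rfl, h1, h2, h3⟩
      rw [mem_image_g hE (h1.trans h2)] at he
      rw [mem_image_g hE (h2.trans h3)] at hf
      exact h _ he _ hf ⟨h1, h2, h3⟩

lemma adj_image {m : ℕ} {E : Finset (ℕ × ℕ)} (hE : E ⊆ Base 0 m) (a b : Fin (m + 1)) :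
    (graphOf (E.image (gmap m))).Adj a b ↔ ((a.1, b.1) ∈ E ∨ (b.1, a.1) ∈ E) := by
  have hlt : ∀ x y : ℕ, (x, y) ∈ E → x < y := fun x y h => (mem_Base.mp (hE h)).2.1
  rw [graphOf, SimpleGraph.fromEdgeSet_adj, mem_coe]
  rcases lt_trichotomy a b with h | h | h
  · rw [mem_image_g hE h]
    constructor
    · intro h'; exact Or.inl h'.1
    · rintro (h' | h')
      · exact ⟨h', h.ne⟩
      · have := hlt _ _ h'; rw [Fin.lt_def] at h; omega
  · subst h
    constructor
    · intro h'; exact absurd rfl h'.2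
    · rintro (h' | h') <;> exact absurd (hlt _ _ h') (lt_irrefl _)
  · rw [Sym2.eq_swap, mem_image_g hE h]
    constructor
    · intro h'; exact Or.inr h'.1
    · rintro (h' | h')
      · have := hlt _ _ h'; rw [Fin.lt_def] at h; omega
      · exact ⟨h', h.ne'⟩

lemma connected_image {m : ℕ} {E : Finset (ℕ × ℕ)} (hE : E ⊆ Base 0 m) :
    (graphOf (E.image (gmap m))).Connected ↔ Connp E 0 m := by
  constructor
  · intro hc p hp a _ ham
    have step : ∀ u v : Fin (m + 1), (graphOf (E.image (gmap m))).Reachable u v → (p u.1 ↔ p v.1) := by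
      rintro u v ⟨w⟩
      induction w with
      | nil => exact Iff.rfl
      | cons h _ ih =>
        rw [← ih]
        rcases (adj_image hE _ _).mp h with h' | h'
        · exact hp _ h'
        · exact (hp _ h').symm
    exact step ⟨a, by omega⟩ ⟨0, by omega⟩ (hc.preconnected _ _)
  · intro hc
    rw [SimpleGraph.connected_iff_exists_forall_reachable]
    refine ⟨0, ?_⟩
    intro a
    have := hc (fun c => ∃ h : c < m + 1, (graphOf (E.image (gmap m))).Reachable 0 ⟨c, h⟩) ?_ a.1
      (Nat.zero_le _) (by omega)
    · obtain ⟨_, h⟩ := this.mpr ⟨by omega, SimpleGraph.Reachable.refl _⟩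
      exact h
    · rintro ⟨x, y⟩ he
      have hb := mem_Base.mp (hE he)
      simp only at hb ⊢
      have hadj : (graphOf (E.image (gmap m))).Adj ⟨x, by omega⟩ ⟨y, by omega⟩ :=
        (adj_image hE _ _).mpr (Or.inl he)
      constructor
      · rintro ⟨_, h⟩
        exact ⟨by omega, h.trans hadj.reachable⟩
      · rintro ⟨_, h⟩
        exact ⟨by omega, h.trans hadj.symm.reachable⟩

lemma hasEdge_image {m : ℕ} (hm : 1 ≤ m) {E : Finset (ℕ × ℕ)} (hE : E ⊆ Base 0 m) :
    HasEdge1n (E.image (gmap m)) ↔ (0, m) ∈ E := by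
  constructor
  · rintro ⟨a, b, ha, hb, h⟩
    rw [mem_image_g hE (by rw [Fin.lt_def]; omega), ha, hb] at h
    exact h
  · intro h
    refine ⟨⟨0, by omega⟩, ⟨m, by omega⟩, rfl, rfl, ?_⟩
    rw [mem_image_g hE (by rw [Fin.lt_def]; simp only; omega)]
    exact h

lemma nccEdge_eq (m k : ℕ) (hm : 1 ≤ m) :
    nccEdge (m + 1) k = ((FS 0 m).filter (fun E => E.card = k)).card := by
  rw [nccEdge, Nat.card_eq_fintype_card, Fintype.card_subtype]
  symm
  refine card_bij (fun E _ => E.image (gmap m)) ?_ ?_ ?_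
  · intro E hE
    rw [mem_filter, mem_FS] at hE
    obtain ⟨⟨hB, hN, hC, hm'⟩, hk⟩ := hE
    rw [mem_filter]
    refine ⟨mem_univ _, ⟨(IsNC_image hB).mpr hN, (connected_image hB).mpr hC⟩, ?_,
      (hasEdge_image hm hB).mpr hm'⟩
    rw [card_image_of_injOn ((gmap_inj m).mono (by exact_mod_cast hB)), hk]
  · intro E hE E' hE' heq
    rw [mem_filter, mem_FS] at hE hE'
    have hB := hE.1.1
    have hB' := hE'.1.1
    have key : ∀ A B : Finset (ℕ × ℕ), A ⊆ Base 0 m → B ⊆ Base 0 m →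
        A.image (gmap m) = B.image (gmap m) → A ⊆ B := by
      intro A B hA hB h e he
      have : gmap m e ∈ B.image (gmap m) := h ▸ mem_image_of_mem _ he
      obtain ⟨f, hf, hfe⟩ := mem_image.mp this
      have := gmap_inj m (mem_coe.mpr (hB hf)) (mem_coe.mpr (hA he)) hfe
      rwa [← this]
    exact subset_antisymm (key _ _ hB hB' heq) (key _ _ hB' hB heq.symm)
  · intro F hF
    rw [mem_filter] at hF
    obtain ⟨-, ⟨hN, hC⟩, hk, hedge⟩ := hF
    have hB : (Base 0 m).filter (fun e => gmap m e ∈ F) ⊆ Base 0 m := filter_subset _ _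
    have him : ((Base 0 m).filter (fun e => gmap m e ∈ F)).image (gmap m) = F := by
      ext s
      constructor
      · intro h
        obtain ⟨e, he, rfl⟩ := mem_image.mp h
        exact (mem_filter.mp he).2
      · intro hs
        have hd := hN.1 s hs
        have pos : ∀ a b : Fin (m + 1), a < b → s(a, b) ∈ F →
            s(a, b) ∈ ((Base 0 m).filter (fun e => gmap m e ∈ F)).image (gmap m) := by
          intro a b hab h
          rw [Fin.lt_def] at hab
          have hb : (a.1, b.1) ∈ Base 0 m := by rw [mem_Base]; simp only; omega
          rw [mem_image_g hB hab, mem_filter]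
          refine ⟨hb, ?_⟩
          rw [(gmap_eq hb hab).mpr rfl]; exact h
        induction s with
        | _ a b =>
          rw [Sym2.mk_isDiag_iff] at hd
          rcases lt_or_gt_of_ne hd with h | h
          · exact pos a b h hs
          · rw [Sym2.eq_swap] at hs ⊢
            exact pos b a h hs
    refine ⟨_, ?_, him⟩
    rw [← him] at hN hC hk hedge
    rw [mem_filter, mem_FS]
    refine ⟨⟨hB, (IsNC_image hB).mp hN, (connected_image hB).mp hC, (hasEdge_image hm hB).mp hedge⟩, ?_⟩
    rw [card_image_of_injOn ((gmap_inj m).mono (by exact_mod_cast hB))] at hk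
    exact hk

end Transfer

/-- For `n ≥ 3` and `n-1 ≤ k ≤ 2n-4`: `f_{n,k} + f_{n,k+1} = c_{n,k} + d_{n,k}`,
stated multiplied through by `(n-1)(n-2)` to avoid the divisions in the formulas
`c_{n,k} = (1/(n-1))·C(3n-3, n+k)·C(k-1, n-2)` and
`d_{n,k} = (2/(n-2))·C(3n-5, n+k)·C(k-1, n-3)`. -/
theorem stmt9 (n k : ℕ) (hn : 3 ≤ n) (hnk : (n : ℤ) - 1 ≤ (k : ℤ))
    (hk : (k : ℤ) ≤ 2 * (n : ℤ) - 4) :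
    (n - 1) * (n - 2) * (nccEdge n k + nccEdge n (k + 1)) =
      (n - 2) * (Nat.choose (3 * n - 3) (n + k) * Nat.choose (k - 1) (n - 2)) +
        (n - 1) * (2 * (Nat.choose (3 * n - 5) (n + k) * Nat.choose (k - 1) (n - 3))) := by
  have h := count_pairs n k hn (by omega) (by omega)
  have hf : ∀ j, (gp (FS 0 (n - 1))).coeff j = (nccEdge n j : ℚ) := by
    intro j
    have e : n = (n - 1) + 1 := by omega
    rw [gp_coeff, e, nccEdge_eq _ _ (by omega), Nat.add_sub_cancel]
  rw [hf, hf] at h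
  have c1 : ((n - 1 : ℕ) : ℚ) = (n : ℚ) - 1 := by rw [Nat.cast_sub (by omega)]; simp
  have c2 : ((n - 2 : ℕ) : ℚ) = (n : ℚ) - 2 := by rw [Nat.cast_sub (by omega)]; simp
  rw [← c1, ← c2] at h
  exact_mod_cast h
end
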